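/- arXiv:1812.07550 — 2 statements merged into one kernel-verified Lean document; each statement's English description precedes it below -/
import Mathlib

section
/- (Göllnitz–Gordon) For every nonnegative integer n, A(n) = B(n), where A(n) is the number of partitions of n into parts which are distinct, nonconsecutive integers such that no two consecutive even integers appear (equivalently, partitions whose parts in decreasing order satisfy γ_i − γ_{i+1} ≥ 2, with γ_i − γ_{i+1} ≥ 3 whenever γ_i is even), and B(n) is the number of partitions of n into parts congruent to 1, 4, or 7 modulo 8. -/
/-- The parts of `p` sorted in weakly increasing order. -/
def sortedParts {n : ℕ} (p : n.Partition) : List ℕ := p.parts.sort (· ≤ ·)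

/-- A partition is a Göllnitz–Gordon partition if its parts, in decreasing order
`γ₁ ≥ γ₂ ≥ ⋯`, satisfy `γ_i - γ_{i+1} ≥ 2`, with `γ_i - γ_{i+1} ≥ 3` whenever `γ_i`
is even.  (In the increasing sorted list `l`, the larger of two consecutive parts
`l_i ≤ l_{i+1}` plays the role of `γ_i`.)  In particular the parts are distinct and
nonconsecutive, and no two consecutive even integers appear. -/
def IsGG {n : ℕ} (p : n.Partition) : Prop :=
  ∀ i : ℕ, ∀ h : i + 1 < (sortedParts p).length,
    2 ≤ (sortedParts p).get ⟨i + 1, h⟩ - (sortedParts p).get ⟨i, Nat.lt_of_succ_lt h⟩ ∧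
    (Even ((sortedParts p).get ⟨i + 1, h⟩) →
      3 ≤ (sortedParts p).get ⟨i + 1, h⟩ - (sortedParts p).get ⟨i, Nat.lt_of_succ_lt h⟩)

/-- `A n` is the number of Göllnitz–Gordon partitions of `n`. -/
noncomputable def A (n : ℕ) : ℕ := Nat.card {p : n.Partition // IsGG p}

/-- `B n` is the number of partitions of `n` into parts congruent to `1`, `4`, or `7`
modulo `8`. -/
noncomputable def B (n : ℕ) : ℕ :=
  Nat.card {p : n.Partition // ∀ a ∈ p.parts, a % 8 = 1 ∨ a % 8 = 4 ∨ a % 8 = 7}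

namespace GG
open Finset

section field
variable {K : Type*} [Field K]

/-- Gaussian binomial coefficients, recursively. -/
def qb (Q : K) : ℕ → ℕ → K
  | _, 0 => 1
  | 0, _ + 1 => 0
  | L + 1, m + 1 => Q ^ (m + 1) * qb Q L (m + 1) + qb Q L m

/-- The `q`-Pochhammer symbol `(Q; Q)_n`. -/
def qp {R : Type*} [CommRing R] (Q : R) (n : ℕ) : R := ∏ i ∈ range n, (1 - Q ^ (i + 1))

lemma qb_zero_right (Q : K) (L : ℕ) : qb Q L 0 = 1 := by cases L <;> rfl

lemma qb_gt (Q : K) : ∀ L m : ℕ, L < m → qb Q L m = 0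
  | 0, 0, h => by omega
  | 0, m + 1, _ => rfl
  | L + 1, 0, h => by omega
  | L + 1, m + 1, h => by
    rw [qb, qb_gt Q L (m + 1) (by omega), qb_gt Q L m (by omega)]; simp

lemma qb_formula (Q : K) : ∀ n a b : ℕ, a + b = n →
    qb Q (a + b) a * (qp Q a * qp Q b) = qp Q (a + b) := by
  intro n
  induction n with
  | zero => intro a b h; obtain rfl : a = 0 := by omega
            obtain rfl : b = 0 := by omega
            simp [qb_zero_right, qp]
  | succ n ih =>
    intro a b h
    rcases a with _ | a
    · simp [qb_zero_right, qp]
    rcases b with _ | b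
    · have h1 := ih a 0 (by omega)
      have : qb Q (a + 1) (a + 1) = qb Q a a := by
        rw [qb, qb_gt Q a (a + 1) (by omega)]; simp
      simp only [add_zero] at *
      rw [this]
      have e : qp Q (a + 1) = qp Q a * (1 - Q ^ (a + 1)) := by simp [qp, prod_range_succ]
      rw [e]
      linear_combination (1 - Q ^ (a + 1)) * h1
    · have h1 := ih (a + 1) b (by omega)
      have h2 := ih a (b + 1) (by omega)
      have e : ∀ a, qp Q (a + 1) = qp Q a * (1 - Q ^ (a + 1)) := by
        intro a; simp [qp, prod_range_succ]
      rw [show a + 1 + (b + 1) = (a + b + 1) + 1 by ring, qb]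
      rw [show a + 1 + b = a + b + 1 by ring] at h1
      rw [show a + (b + 1) = a + b + 1 by ring] at h2
      rw [e (a + b + 1)]
      rw [e a] at h1 ⊢
      rw [e b] at h2 ⊢
      linear_combination Q ^ (a + 1) * (1 - Q ^ (b + 1)) * h1 + (1 - Q ^ (a + 1)) * h2

/-- The `q`-Chu-Vandermonde sum. -/
lemma cv (Q : K) : ∀ (L : ℕ) (z c : K), (∀ i : ℕ, 1 - c * Q ^ i ≠ 0) →
    ∑ m ∈ range (L + 1), qb Q L m *
      ((∏ i ∈ range m, (z * Q ^ i + c * Q ^ (2 * i))) / ∏ i ∈ range m, (1 - c * Q ^ i)) =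
    (∏ i ∈ range L, (1 + z * Q ^ i)) / ∏ i ∈ range L, (1 - c * Q ^ i) := by
  intro L
  induction L with
  | zero => intro z c h; simp [qb]
  | succ L ih =>
    intro z c hc
    set h : ℕ → K := fun m =>
      (∏ i ∈ range m, (z * Q ^ i + c * Q ^ (2 * i))) / ∏ i ∈ range m, (1 - c * Q ^ i) with hh
    have hc' : ∀ i : ℕ, 1 - c * Q * Q ^ i ≠ 0 := by
      intro i; have := hc (i + 1); rwa [pow_succ', ← mul_assoc] at this
    have ih' := ih (z * Q) (c * Q) hc'
    have h0 : 1 - c ≠ 0 := by simpa using hc 0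
    have key : ∀ m, Q ^ m * h m + h (m + 1) = (1 + z) / (1 - c) *
        ((∏ i ∈ range m, (z * Q * Q ^ i + c * Q * Q ^ (2 * i))) /
          ∏ i ∈ range m, (1 - c * Q * Q ^ i)) := by
      intro m
      have e1 : ∏ i ∈ range m, (z * Q * Q ^ i + c * Q * Q ^ (2 * i)) =
          Q ^ m * ∏ i ∈ range m, (z * Q ^ i + c * Q ^ (2 * i)) := by
        rw [← card_range m, ← prod_const, card_range, ← prod_mul_distrib]
        exact prod_congr rfl fun i _ => by ring
      have e2 : (∏ i ∈ range m, (1 - c * Q ^ i)) * (1 - c * Q ^ m) =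
          (1 - c) * ∏ i ∈ range m, (1 - c * Q * Q ^ i) := by
        rw [← prod_range_succ, prod_range_succ', mul_comm]
        congr 1
        · simp
        · exact prod_congr rfl fun i _ => by ring
      have n1 : ∏ i ∈ range m, (1 - c * Q ^ i) ≠ 0 := prod_ne_zero_iff.2 fun i _ => hc i
      have n2 : ∏ i ∈ range m, (1 - c * Q * Q ^ i) ≠ 0 := prod_ne_zero_iff.2 fun i _ => hc' i
      have n3 := hc m
      simp only [hh]
      rw [e1, prod_range_succ _ m, prod_range_succ _ m]
      have : ∏ i ∈ range m, (1 - c * Q * Q ^ i) =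
        (∏ i ∈ range m, (1 - c * Q ^ i)) * (1 - c * Q ^ m) / (1 - c) := by
        rw [e2]; field_simp
      rw [this]
      generalize (∏ i ∈ range m, (1 - c * Q ^ i)) = p at *
      generalize (∏ i ∈ range m, (z * Q ^ i + c * Q ^ (2 * i))) = s at *
      rw [pow_mul' Q 2 m]
      clear e1 e2 this n2
      generalize Q ^ m = t at *
      have n4 : 1 - t * c ≠ 0 := by rwa [mul_comm] at n3
      field_simp
      ring
    have e3 : ∑ m ∈ range (L + 1 + 1), qb Q (L + 1) m * h m =
        ∑ m ∈ range (L + 1), qb Q L m * (Q ^ m * h m + h (m + 1)) := by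
      rw [sum_range_succ']
      simp only [qb]
      have : ∑ m ∈ range (L + 1 + 1), Q ^ m * qb Q L m * h m =
         ∑ m ∈ range (L + 1), Q ^ m * qb Q L m * h m := by
        rw [sum_range_succ, qb_gt Q L (L + 1) (by omega)]; simp
      rw [sum_range_succ'] at this
      simp only [add_mul, sum_add_distrib, mul_add]
      have t : ∑ m ∈ range (L + 1), qb Q L m * (Q ^ m * h m) =
         ∑ m ∈ range (L + 1), Q ^ m * qb Q L m * h m := sum_congr rfl fun i _ => by ring
      rw [t, ← this]
      simp [qb_zero_right]
      ring
    rw [e3]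
    simp only [key]
    rw [prod_range_succ', prod_range_succ']
    have : ∀ m, qb Q L m * ((1 + z) / (1 - c) *
        ((∏ i ∈ range m, (z * Q * Q ^ i + c * Q * Q ^ (2 * i))) /
          ∏ i ∈ range m, (1 - c * Q * Q ^ i))) = (1 + z) / (1 - c) * (qb Q L m *
        ((∏ i ∈ range m, (z * Q * Q ^ i + c * Q * Q ^ (2 * i))) /
          ∏ i ∈ range m, (1 - c * Q * Q ^ i))) := fun m => by ring
    simp only [this]
    rw [← mul_sum, ih']
    have e4 : ∀ w : K, ∀ i, w * Q ^ (i + 1) = w * Q * Q ^ i := fun w i => by ring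
    simp only [e4, pow_zero, mul_one]
    rw [div_mul_div_comm, mul_comm (1 + z), mul_comm (1 - c)]

lemma qp_ne (Q : K) (hQ : ∀ i : ℕ, 1 - Q ^ (i + 1) ≠ 0) (n : ℕ) : qp Q n ≠ 0 :=
  prod_ne_zero_iff.2 fun i _ => hQ i

lemma qb_eq (Q : K) (hQ : ∀ i : ℕ, 1 - Q ^ (i + 1) ≠ 0) (L m : ℕ) (h : m ≤ L) :
    qb Q L m = qp Q L / (qp Q (L - m) * qp Q m) := by
  obtain ⟨b, rfl⟩ := Nat.exists_eq_add_of_le h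
  have := qb_formula Q _ m b rfl
  have n1 := qp_ne Q hQ m
  have n2 := qp_ne Q hQ b
  rw [Nat.add_sub_cancel_left, ← this]
  field_simp

/-- weights -/
def sg {R : Type*} [CommRing R] (Q y : R) (n : ℕ) : R := ∏ i ∈ range n, (y * Q ^ i + Q ^ (2 * i + 1))

lemma conj (Q y : K) (hQ : ∀ i : ℕ, 1 - Q ^ (i + 1) ≠ 0) (r L : ℕ) :
    ∑ m ∈ range (L + 1), sg Q y (r + m) / (qp Q (L - m) * (qp Q m * qp Q (m + 2 * r))) =
    sg Q y r * (∏ i ∈ range L, (1 + y * Q ^ (r + i))) / (qp Q L * qp Q (L + 2 * r)) := by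
  have hc : ∀ i : ℕ, 1 - Q ^ (2 * r + 1) * Q ^ i ≠ 0 := by
    intro i; have := hQ (2 * r + i)
    rwa [← pow_add, show 2 * r + 1 + i = 2 * r + i + 1 by ring]
  have h := cv Q L (y * Q ^ r) (Q ^ (2 * r + 1)) hc
  have e1 : ∀ m, qp Q (m + 2 * r) = qp Q (2 * r) * ∏ i ∈ range m, (1 - Q ^ (2 * r + 1) * Q ^ i) := by
    intro m
    rw [qp, qp, add_comm, prod_range_add]
    congr 1
    exact prod_congr rfl fun i _ => by ring
  have e2 : ∀ m, sg Q y (r + m) = sg Q y r *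
      ∏ i ∈ range m, (y * Q ^ r * Q ^ i + Q ^ (2 * r + 1) * Q ^ (2 * i)) := by
    intro m
    rw [sg, sg, prod_range_add]
    congr 1
    exact prod_congr rfl fun i _ => by ring
  have e3 : ∏ i ∈ range L, (1 + y * Q ^ (r + i)) = ∏ i ∈ range L, (1 + y * Q ^ r * Q ^ i) :=
    prod_congr rfl fun i _ => by ring
  rw [e3, e1 L]
  have n1 := qp_ne Q hQ L
  have n2 := qp_ne Q hQ (2 * r)
  have : sg Q y r * (∏ i ∈ range L, (1 + y * Q ^ r * Q ^ i)) /
      (qp Q L * (qp Q (2 * r) * ∏ i ∈ range L, (1 - Q ^ (2 * r + 1) * Q ^ i))) =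
      sg Q y r / (qp Q L * qp Q (2 * r)) * ((∏ i ∈ range L, (1 + y * Q ^ r * Q ^ i)) /
       ∏ i ∈ range L, (1 - Q ^ (2 * r + 1) * Q ^ i)) := by
    rw [div_mul_div_comm, mul_assoc]
  rw [this, ← h, mul_sum]
  refine sum_congr rfl fun m hm => ?_
  have hm' : m ≤ L := by simp at hm; omega
  rw [e1, e2, qb_eq Q hQ L m hm']
  have n3 := qp_ne Q hQ (L - m)
  have n4 := qp_ne Q hQ m
  have n5 : ∏ i ∈ range m, (1 - Q ^ (2 * r + 1) * Q ^ i) ≠ 0 := prod_ne_zero_iff.2 fun i _ => hc i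
  field_simp

/-- Bailey transform. -/
lemma bailey (Q y : K) (hQ : ∀ i : ℕ, 1 - Q ^ (i + 1) ≠ 0) (α β : ℕ → K)
    (hβ : ∀ n, β n = ∑ r ∈ range (n + 1), α r / (qp Q (n - r) * qp Q (n + r))) (N : ℕ) :
    ∑ n ∈ range (N + 1), sg Q y n / qp Q (N - n) * β n =
    ∑ r ∈ range (N + 1), α r * (sg Q y r * ∏ i ∈ range (N - r), (1 + y * Q ^ (r + i))) /
      (qp Q (N - r) * qp Q (N + r)) := by
  simp only [hβ, mul_sum]
  rw [sum_comm' (s' := fun r => Ico r (N + 1)) (t' := range (N + 1))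
    (by intro x y; simp only [mem_range, mem_Ico]; omega)]
  refine sum_congr rfl fun r hr => ?_
  have hr' : r ≤ N := by simp at hr; omega
  obtain ⟨L, rfl⟩ := Nat.exists_eq_add_of_le hr'
  have h := conj Q y hQ r L
  rw [sum_Ico_eq_sum_range, show r + L + 1 - r = L + 1 by omega, Nat.add_sub_cancel_left,
    show r + L + r = L + 2 * r by ring, mul_div_assoc, ← h, mul_sum]
  refine sum_congr rfl fun m hm => ?_
  rw [show r + L - (r + m) = L - m by omega, Nat.add_sub_cancel_left,
    show r + m + r = m + 2 * r by ring]
  rw [div_mul_div_comm]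
  ring


/-- Theta coefficients. -/
def al {R : Type*} [CommRing R] (Q w w' : R) (r : ℕ) : R :=
  if r = 0 then 1 else (∏ i ∈ range r, (-(w * Q ^ i))) + ∏ i ∈ range r, (-(w' * Q ^ i))

lemma sum_fold (g : ℕ → K) (n : ℕ) : ∑ k ∈ range (2 * n + 1), g k =
    ∑ r ∈ range (n + 1), if r = 0 then g n else g (n + r) + g (n - r) := by
  rw [show 2 * n + 1 = n + (n + 1) by ring, sum_range_add, ← sum_range_reflect,
    sum_range_succ' _ n, sum_range_succ' _ n]
  simp only [Nat.add_eq_zero_iff, one_ne_zero, and_false, if_false, if_true, sum_add_distrib]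
  have : ∀ k, n - 1 - k = n - (k + 1) := fun k => by omega
  simp only [this, add_zero]
  ring

/-- Finite Jacobi triple product. -/
lemma jtp (Q w w' : K) (hQ : ∀ i : ℕ, 1 - Q ^ (i + 1) ≠ 0) (hQ0 : Q ≠ 0) (hw : w * w' = Q)
    (n : ℕ) : ∑ r ∈ range (n + 1), al Q w w' r / (qp Q (n - r) * qp Q (n + r)) =
    (∏ i ∈ range n, ((1 - w * Q ^ i) * (1 - w' * Q ^ i))) / qp Q (2 * n) := by
  have h := cv Q (2 * n) (-w / Q ^ n) 0 (by simp)
  simp only [zero_mul, add_zero, sub_zero, prod_const_one, div_one] at h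
  set z := -w / Q ^ n with hz
  have hw0 : w ≠ 0 := by rintro rfl; simp at hw; exact hQ0 hw.symm
  have hz0 : z ≠ 0 := by rw [hz]; exact div_ne_zero (neg_ne_zero.2 hw0) (pow_ne_zero _ hQ0)
  have hzn : z * Q ^ n = -w := by rw [hz]; field_simp
  have hzw : z * w' * Q ^ n = -Q := by rw [mul_right_comm, hzn, ← hw]; ring
  set G : ℕ → K := fun k => ∏ i ∈ range k, (z * Q ^ i) with hG
  have hGn : G n ≠ 0 := prod_ne_zero_iff.2 fun i _ => mul_ne_zero hz0 (pow_ne_zero _ hQ0)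
  have g1 : ∀ r, G (n + r) = G n * ∏ i ∈ range r, (-(w * Q ^ i)) := by
    intro r
    simp only [hG, prod_range_add]
    congr 1
    refine prod_congr rfl fun i _ => ?_
    rw [pow_add, ← mul_assoc, hzn]; ring
  have g2 : ∀ r ≤ n, G (n - r) = G n * ∏ i ∈ range r, (-(w' * Q ^ i)) := by
    intro r hr
    obtain ⟨j, rfl⟩ := Nat.exists_eq_add_of_le' hr
    rw [Nat.add_sub_cancel]
    simp only [hG, prod_range_add]
    rw [mul_assoc, ← prod_range_reflect (fun i => -(w' * Q ^ i)), ← prod_mul_distrib]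
    refine Eq.symm (Eq.trans (congrArg _ (prod_eq_one ?_)) (mul_one _))
    intro i hi
    have hi' : i < r := by simpa using hi
    have e : Q ^ (j + i) * Q ^ (r - 1 - i) * Q = Q ^ (j + r) := by
      rw [← pow_add, ← pow_succ]; congr 1; omega
    apply mul_right_cancel₀ hQ0
    linear_combination (-(z * w')) * e - hzw
  have g3 : ∏ i ∈ range (2 * n), (1 + z * Q ^ i) =
      G n * ∏ i ∈ range n, ((1 - w * Q ^ i) * (1 - w' * Q ^ i)) := by
    rw [two_mul, prod_range_add, prod_mul_distrib, ← prod_range_reflect (fun i => 1 - w' * Q ^ i),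
      mul_comm (∏ i ∈ range n, (1 - w * Q ^ i)), ← mul_assoc]
    congr 1
    · simp only [hG]
      rw [← prod_mul_distrib]
      refine prod_congr rfl fun i hi => ?_
      have hi' : i < n := by simpa using hi
      have e : Q ^ i * Q ^ (n - 1 - i) * Q = Q ^ n := by
        rw [← pow_add, ← pow_succ]; congr 1; omega
      apply mul_right_cancel₀ hQ0
      linear_combination (z * w') * e + hzw
    · refine prod_congr rfl fun i hi => ?_
      rw [pow_add, ← mul_assoc, hzn]; ring
  rw [g3, sum_fold] at h
  have n0 := qp_ne Q hQ (2 * n)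
  rw [eq_div_iff n0]
  apply mul_left_cancel₀ hGn
  rw [← h, sum_mul, mul_sum]
  refine sum_congr rfl fun r hr => ?_
  have hr' : r ≤ n := by simp at hr; omega
  have n1 := qp_ne Q hQ (n - r)
  have n2 := qp_ne Q hQ (n + r)
  rw [al]
  split_ifs with h0
  · subst h0
    rw [qb_eq Q hQ _ _ (by omega), show 2 * n - n = n by omega]
    simp only [Nat.sub_zero, add_zero]
    ring
  · change _ = qb Q (2 * n) (n + r) * G (n + r) + qb Q (2 * n) (n - r) * G (n - r)
    rw [g1, g2 r hr', qb_eq Q hQ _ _ (by omega), qb_eq Q hQ _ _ (by omega),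
      show 2 * n - (n + r) = n - r by omega, show 2 * n - (n - r) = n + r by omega]
    field_simp

lemma main_field (q : K) (hq0 : q ≠ 0) (hq : ∀ i : ℕ, 1 - q ^ (i + 1) ≠ 0) (N : ℕ) :
    ∑ n ∈ range (N + 1), sg (q ^ 2) q n / (qp (q ^ 2) (N - n) * qp (q ^ 2) n) =
    (∏ i ∈ range N, (1 + q * (q ^ 2) ^ i)) *
    ∑ r ∈ range (N + 1), al (q ^ 8) (q ^ 3) (q ^ 5) r /
      (qp (q ^ 2) (N - r) * qp (q ^ 2) (N + r)) := by
  set Q := q ^ 2 with hQd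
  have hQ : ∀ i : ℕ, 1 - Q ^ (i + 1) ≠ 0 := by
    intro i
    have := hq (2 * i + 1)
    rwa [hQd, ← pow_mul, show 2 * (i + 1) = 2 * i + 1 + 1 by ring]
  have hQ0 : Q ≠ 0 := pow_ne_zero _ hq0
  have s1 := bailey Q 0 hQ (al Q 1 Q) (fun n => if n = 0 then 1 else 0) (by
    intro n
    rw [jtp Q 1 Q hQ hQ0 (one_mul _)]
    rcases n with _ | n
    · simp [qp]
    · rw [prod_eq_zero (i := 0) (by simp) (by simp)]; simp)
  have s2 := bailey Q q hQ (fun r => al Q 1 Q r * sg Q 0 r) (fun n => 1 / qp Q n) (by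
    intro n
    have := s1 n
    simp only [zero_mul, add_zero, prod_const_one, mul_one, mul_ite, mul_zero] at this
    rw [← this, sum_ite_eq' ]
    simp [sg]) N
  have e1 : ∀ n, sg Q q n / (qp Q (N - n) * qp Q n) = sg Q q n / qp Q (N - n) * (1 / qp Q n) := by
    intro n; rw [div_mul_div_comm, mul_one]
  simp only [e1]
  rw [s2, mul_sum]
  refine sum_congr rfl fun r hr => ?_
  have hr' : r ≤ N := by simp at hr; omega
  rw [← mul_div_assoc]
  congr 1
  have e2 : ∏ i ∈ range N, (1 + q * Q ^ i) = (∏ i ∈ range r, (1 + q * Q ^ i)) *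
      ∏ i ∈ range (N - r), (1 + q * Q ^ (r + i)) := by
    rw [← prod_range_add]; congr 2; omega
  have e3 : sg Q q r = (∏ i ∈ range r, q ^ (2 * i + 1)) * ∏ i ∈ range r, (1 + q * Q ^ i) := by
    rw [sg, ← prod_mul_distrib]
    exact prod_congr rfl fun i _ => by rw [hQd]; ring
  have e4 : al (q ^ 8) (q ^ 3) (q ^ 5) r =
      al Q 1 Q r * sg Q 0 r * ∏ i ∈ range r, q ^ (2 * i + 1) := by
    rw [mul_assoc, sg, ← prod_mul_distrib, al, al]
    split_ifs with h
    · subst h; simp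
    · rw [add_mul, ← prod_mul_distrib, ← prod_mul_distrib]
      congr 1 <;> exact prod_congr rfl fun i _ => by rw [hQd]; ring
  rw [e2, e3, e4]
  ring

end field

section ps
open PowerSeries

/-- Inverse of the `q`-Pochhammer symbol. -/
noncomputable def ei (a n : ℕ) : ℚ⟦X⟧ := (qp (X ^ a : ℚ⟦X⟧) n)⁻¹

lemma cc_qp (a n : ℕ) (ha : 0 < a) : constantCoeff (qp (X ^ a : ℚ⟦X⟧) n) = 1 := by
  rw [qp, map_prod]
  apply prod_eq_one
  intro i _
  simp [ha.ne']

lemma qp_ei (a n : ℕ) (ha : 0 < a) : qp (X ^ a : ℚ⟦X⟧) n * ei a n = 1 :=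
  PowerSeries.mul_inv_cancel _ (by rw [cc_qp a n ha]; exact one_ne_zero)

/-- The embedding in the fraction field. -/
noncomputable def ph : ℚ⟦X⟧ →+* FractionRing ℚ⟦X⟧ := algebraMap _ _

lemma ph_inj : Function.Injective ph := IsFractionRing.injective _ _

lemma ph_qp (Q : ℚ⟦X⟧) (n : ℕ) : ph (qp Q n) = qp (ph Q) n := by
  simp [qp, map_prod]

lemma ph_sg (Q y : ℚ⟦X⟧) (n : ℕ) : ph (sg Q y n) = sg (ph Q) (ph y) n := by
  simp [sg, map_prod]

lemma ph_al (Q w w' : ℚ⟦X⟧) (n : ℕ) : ph (al Q w w' n) = al (ph Q) (ph w) (ph w') n := by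
  rw [al, al]
  split_ifs <;> simp [map_prod]

lemma ph_ei (a n : ℕ) (ha : 0 < a) : ph (ei a n) = (qp (ph X ^ a) n)⁻¹ := by
  rw [← map_pow, ← ph_qp]
  apply eq_inv_of_mul_eq_one_right
  rw [← map_mul, qp_ei a n ha, map_one]

lemma ph_X0 : ph X ≠ 0 := by
  rw [Ne, map_eq_zero_iff _ ph_inj]; exact PowerSeries.X_ne_zero

lemma ph_X (i : ℕ) : 1 - ph X ^ (i + 1) ≠ 0 := by
  rw [← map_pow, ← map_one ph, ← map_sub, Ne, map_eq_zero_iff _ ph_inj]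
  intro h
  have := congrArg constantCoeff h
  simp at this

lemma main_ps (N : ℕ) :
    ∑ n ∈ range (N + 1), sg (X ^ 2 : ℚ⟦X⟧) X n * (ei 2 (N - n) * ei 2 n) =
    (∏ i ∈ range N, (1 + X * (X ^ 2) ^ i)) *
    ∑ r ∈ range (N + 1), al (X ^ 8 : ℚ⟦X⟧) (X ^ 3) (X ^ 5) r * (ei 2 (N - r) * ei 2 (N + r)) := by
  apply ph_inj
  have := main_field (ph X) ph_X0 ph_X N
  simp only [map_sum, map_mul, ph_sg, ph_al, ph_ei _ _ (show 0 < 2 by norm_num), map_prod, map_add,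
    map_one, map_pow]
  simpa only [div_eq_mul_inv, mul_inv] using this

lemma jtp_ps (n : ℕ) :
    ∑ r ∈ range (n + 1), al (X ^ 8 : ℚ⟦X⟧) (X ^ 3) (X ^ 5) r * (ei 8 (n - r) * ei 8 (n + r)) =
    (∏ i ∈ range n, ((1 - X ^ 3 * (X ^ 8) ^ i) * (1 - X ^ 5 * (X ^ 8) ^ i))) * ei 8 (2 * n) := by
  apply ph_inj
  have := jtp (ph X ^ 8) (ph X ^ 3) (ph X ^ 5) (by
    intro i; rw [← pow_mul, show 8 * (i + 1) = 8 * i + 7 + 1 by ring]; exact ph_X _)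
    (pow_ne_zero _ ph_X0) (by ring) n
  simp only [map_sum, map_mul, ph_al, ph_ei _ _ (show 0 < 8 by norm_num), map_prod, map_sub,
    map_one, map_pow]
  simpa only [div_eq_mul_inv, mul_inv] using this

/-- Congruence modulo `X ^ M`. -/
def cg (M : ℕ) (f g : ℚ⟦X⟧) : Prop := X ^ M ∣ f - g

lemma cg.rfl {M : ℕ} {f : ℚ⟦X⟧} : cg M f f := by simp [cg]

lemma cg.symm {M : ℕ} {f g : ℚ⟦X⟧} (h : cg M f g) : cg M g f := by
  rw [cg, ← neg_sub]; exact (dvd_neg).2 h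

lemma cg.trans {M : ℕ} {f g h : ℚ⟦X⟧} (h1 : cg M f g) (h2 : cg M g h) : cg M f h := by
  have := dvd_add h1 h2
  rwa [sub_add_sub_cancel] at this

lemma cg.add {M : ℕ} {f g f' g' : ℚ⟦X⟧} (h1 : cg M f g) (h2 : cg M f' g') :
    cg M (f + f') (g + g') := by
  have := dvd_add h1 h2
  rw [cg]; convert this using 1; ring

lemma cg.mul {M : ℕ} {f g f' g' : ℚ⟦X⟧} (h1 : cg M f g) (h2 : cg M f' g') :
    cg M (f * f') (g * g') := by
  have := dvd_add (h1.mul_right f') (h2.mul_left g)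
  rw [cg]; convert this using 1; ring

lemma cg.mono {M N : ℕ} {f g : ℚ⟦X⟧} (h : cg M f g) (hN : N ≤ M) : cg N f g :=
  (pow_dvd_pow _ hN).trans h

lemma cg_sum {M : ℕ} {s : Finset ℕ} {f g : ℕ → ℚ⟦X⟧} (h : ∀ i ∈ s, cg M (f i) (g i)) :
    cg M (∑ i ∈ s, f i) (∑ i ∈ s, g i) := by
  rw [cg, ← sum_sub_distrib]; exact dvd_sum h

lemma cg_prod_one {M : ℕ} {s : Finset ℕ} {f : ℕ → ℚ⟦X⟧} (h : ∀ i ∈ s, cg M (f i) 1) :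
    cg M (∏ i ∈ s, f i) 1 := by
  classical
  induction s using Finset.induction_on with
  | empty => simp [cg]
  | insert a s ha ih =>
    rw [prod_insert ha]
    simpa using (h a (by simp)).mul (ih fun i hi => h i (by simp [hi]))

lemma cg_one_sub {M k : ℕ} (h : M ≤ k) : cg M (1 - X ^ k) 1 := by
  rw [cg]; simpa using pow_dvd_pow X h

lemma c1 {a j k : ℕ} (ha : 0 < a) (h : j ≤ k) : cg j (qp (X ^ a : ℚ⟦X⟧) k * ei a j) 1 := by
  obtain ⟨d, rfl⟩ := Nat.exists_eq_add_of_le h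
  have : qp (X ^ a : ℚ⟦X⟧) (j + d) * ei a j =
      ∏ i ∈ range d, (1 - (X ^ a : ℚ⟦X⟧) ^ (j + i + 1)) := by
    have h1 := qp_ei a j ha
    rw [qp] at h1
    rw [qp, prod_range_add]
    linear_combination (∏ i ∈ range d, (1 - (X ^ a : ℚ⟦X⟧) ^ (j + i + 1))) * h1
  rw [this]
  apply cg_prod_one
  intro i _
  rw [← pow_mul]
  exact cg_one_sub (by nlinarith)

lemma c1' {a j k : ℕ} (ha : 0 < a) (h : j ≤ k) : cg j (qp (X ^ a : ℚ⟦X⟧) j * ei a k) 1 := by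
  have h1 := (c1 ha h).mul (cg.rfl (f := qp (X ^ a : ℚ⟦X⟧) j * ei a k))
  rw [one_mul] at h1
  have : qp (X ^ a : ℚ⟦X⟧) k * ei a j * (qp (X ^ a : ℚ⟦X⟧) j * ei a k) = 1 := by
    linear_combination (qp (X ^ a : ℚ⟦X⟧) j * ei a j) * qp_ei a k ha + qp_ei a j ha
  rw [this] at h1
  exact h1.symm

/-- abbreviation for the theta coefficients -/
noncomputable abbrev ta (r : ℕ) : ℚ⟦X⟧ := al (X ^ 8 : ℚ⟦X⟧) (X ^ 3) (X ^ 5) r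

lemma X_dvd_prod (r : ℕ) (f : ℕ → ℚ⟦X⟧) (h : ∀ i, X ∣ f i) : X ^ r ∣ ∏ i ∈ range r, f i := by
  rw [← card_range r, ← prod_const, card_range]
  exact prod_dvd_prod_of_dvd _ _ fun i _ => h i

lemma X_dvd_ta (r : ℕ) : X ^ r ∣ ta r := by
  rw [ta, al]
  split_ifs with h
  · subst h; simp
  · apply dvd_add
    · exact X_dvd_prod _ _ fun i => ⟨-(X ^ 2 * (X ^ 8) ^ i), by ring⟩
    · exact X_dvd_prod _ _ fun i => ⟨-(X ^ 4 * (X ^ 8) ^ i), by ring⟩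

lemma X_dvd_sg (r : ℕ) : X ^ r ∣ sg (X ^ 2 : ℚ⟦X⟧) X r :=
  X_dvd_prod _ _ fun i => ⟨(X ^ 2) ^ i + X * (X ^ 2) ^ (2 * i), by ring⟩

lemma cg_shift {r N : ℕ} {f g h : ℚ⟦X⟧} (hr : r ≤ N) (hf : X ^ r ∣ f) (hg : cg (N - r) g h) :
    cg N (f * g) (f * h) := by
  rw [cg, ← mul_sub]
  have := mul_dvd_mul hf hg
  rwa [← pow_add, Nat.add_sub_cancel' hr] at this

lemma L2 (a N : ℕ) (ha : 0 < a) :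
    cg N (qp (X ^ a : ℚ⟦X⟧) N ^ 2 * ∑ r ∈ range (N + 1), ta r * (ei a (N - r) * ei a (N + r)))
      (∑ r ∈ range (N + 1), ta r) := by
  rw [mul_sum]
  apply cg_sum
  intro r hr
  have hr' : r ≤ N := by simp at hr; omega
  have h1 := c1 (a := a) ha (show N - r ≤ N by omega)
  have h2 := (c1' (a := a) ha (show N ≤ N + r by omega)).mono (show N - r ≤ N by omega)
  have h3 := cg_shift hr' (X_dvd_ta r) (h1.mul h2)
  convert h3 using 1 <;> ring

/-- the series coefficients -/
noncomputable def fk (k : ℕ) : ℚ⟦X⟧ := sg (X ^ 2 : ℚ⟦X⟧) X k * ei 2 k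

lemma L1 (N : ℕ) :
    cg N (qp (X ^ 2 : ℚ⟦X⟧) N *
      ∑ n ∈ range (N + 1), sg (X ^ 2 : ℚ⟦X⟧) X n * (ei 2 (N - n) * ei 2 n))
      (∑ n ∈ range (N + 1), fk n) := by
  rw [mul_sum]
  apply cg_sum
  intro r hr
  have hr' : r ≤ N := by simp at hr; omega
  have h1 := c1 (a := 2) (by norm_num) (show N - r ≤ N by omega)
  have h3 := cg_shift hr' (X_dvd_sg r) (h1.mul (cg.rfl (f := ei 2 r)))
  convert h3 using 1
  · ring
  · rw [fk]; ring

lemma L3 (n : ℕ) : cg n (∑ r ∈ range (n + 1), ta r) (qp (X ^ 8 : ℚ⟦X⟧) n *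
    ∏ i ∈ range n, ((1 - X ^ 3 * (X ^ 8) ^ i) * (1 - X ^ 5 * (X ^ 8) ^ i))) := by
  have h := (L2 8 n (by norm_num)).symm
  rw [jtp_ps] at h
  refine h.trans ?_
  have h1 := (c1' (a := 8) (by norm_num) (show n ≤ 2 * n by omega)).mul (cg.rfl (f :=
    qp (X ^ 8 : ℚ⟦X⟧) n *
    ∏ i ∈ range n, ((1 - X ^ 3 * (X ^ 8) ^ i) * (1 - X ^ 5 * (X ^ 8) ^ i))))
  convert h1 using 1 <;> ring

lemma L4 (n N : ℕ) (h : n ≤ N) :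
    cg n (∑ r ∈ range (N + 1), ta r) (∑ r ∈ range (n + 1), ta r) := by
  rw [cg, ← sum_range_add_sum_Ico _ (show n + 1 ≤ N + 1 by omega), add_sub_cancel_left]
  apply dvd_sum
  intro i hi
  simp at hi
  exact (pow_dvd_pow X (by omega)).trans (X_dvd_ta i)

/-- The denominator of the product side. -/
noncomputable def T (n : ℕ) : ℚ⟦X⟧ :=
  ∏ i ∈ range n, ((1 - X ^ (8 * i + 1)) * (1 - X ^ (8 * i + 4)) * (1 - X ^ (8 * i + 7)))

lemma prodP (n : ℕ) : qp (X ^ 8 : ℚ⟦X⟧) n *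
    (∏ i ∈ range n, ((1 - X ^ 3 * (X ^ 8) ^ i) * (1 - X ^ 5 * (X ^ 8) ^ i))) * T n =
    (∏ i ∈ range (4 * n), (1 - X ^ (2 * i + 1))) * ∏ i ∈ range (2 * n), (1 - X ^ (4 * i + 4)) := by
  rw [qp, T]
  induction n with
  | zero => simp
  | succ n ih =>
    rw [show 4 * (n + 1) = 4 * n + 1 + 1 + 1 + 1 by ring, show 2 * (n + 1) = 2 * n + 1 + 1 by ring]
    simp only [prod_range_succ]
    generalize (∏ i ∈ range (4 * n), (1 - X ^ (2 * i + 1) : ℚ⟦X⟧)) = A1 at *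
    generalize (∏ i ∈ range (2 * n), (1 - X ^ (4 * i + 4) : ℚ⟦X⟧)) = A2 at *
    linear_combination (1 - (X ^ 8) ^ (n + 1)) * ((1 - X ^ 3 * (X ^ 8) ^ n) *
      (1 - X ^ 5 * (X ^ 8) ^ n)) *
      ((1 - X ^ (8 * n + 1)) * (1 - X ^ (8 * n + 4)) * (1 - X ^ (8 * n + 7))) * ih

lemma prodQ (n : ℕ) : qp (X ^ 2 : ℚ⟦X⟧) (2 * n) =
    (∏ i ∈ range n, (1 - X ^ (4 * i + 2))) * ∏ i ∈ range n, (1 - X ^ (4 * i + 4)) := by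
  rw [qp]
  induction n with
  | zero => simp
  | succ n ih =>
    rw [show 2 * (n + 1) = 2 * n + 1 + 1 by ring]
    simp only [prod_range_succ]
    rw [ih]
    ring

lemma L5 (n : ℕ) : cg n ((∏ i ∈ range (4 * n), (1 + X * (X ^ 2) ^ i)) *
    (qp (X ^ 8 : ℚ⟦X⟧) n *
    (∏ i ∈ range n, ((1 - X ^ 3 * (X ^ 8) ^ i) * (1 - X ^ 5 * (X ^ 8) ^ i))) * T n))
    (qp (X ^ 2 : ℚ⟦X⟧) (4 * n)) := by
  rw [prodP, show 4 * n = 2 * (2 * n) by ring, prodQ, ← mul_assoc, ← prod_mul_distrib]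
  refine cg.mul ?_ cg.rfl
  rw [show 2 * (2 * n) = 2 * n + 2 * n by ring, prod_range_add]
  have : ∀ i, ((1 + X * (X ^ 2) ^ i) * (1 - X ^ (2 * i + 1)) : ℚ⟦X⟧) = 1 - X ^ (4 * i + 2) := by
    intro i; ring
  simp only [this]
  conv => arg 3; rw [← mul_one (∏ i ∈ range (2 * n), _)]
  refine cg.mul cg.rfl (cg_prod_one fun i _ => cg_one_sub (by omega))

lemma F_T (n : ℕ) : cg n ((∑ k ∈ range (4 * n + 1), fk k) * T n) 1 := by
  have h1 := ((L1 (4 * n)).symm.mono (show n ≤ 4 * n by omega))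
  rw [main_ps] at h1
  have h2 := ((L2 2 (4 * n) (by norm_num)).mono (show n ≤ 4 * n by omega)).trans
    ((L4 n (4 * n) (by omega)).trans (L3 n))
  have h3 := L5 n
  have hq := qp_ei 2 (4 * n) (by norm_num)
  set τ := ∏ i ∈ range (4 * n), (1 + X * (X ^ 2) ^ i : ℚ⟦X⟧)
  set q := qp (X ^ 2 : ℚ⟦X⟧) (4 * n)
  set Pn := qp (X ^ 8 : ℚ⟦X⟧) n *
    (∏ i ∈ range n, ((1 - X ^ 3 * (X ^ 8) ^ i) * (1 - X ^ 5 * (X ^ 8) ^ i)))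
  set S := ∑ r ∈ range (4 * n + 1), al (X ^ 8 : ℚ⟦X⟧) (X ^ 3) (X ^ 5) r *
    (ei 2 (4 * n - r) * ei 2 (4 * n + r))
  have h4 : cg n (q * (τ * S) * T n) (ei 2 (4 * n) * (τ * (Pn * T n))) := by
    have := (cg.rfl (f := ei 2 (4 * n) * τ * T n)).mul h2
    have e : q * (τ * S) * T n = ei 2 (4 * n) * τ * T n * (q ^ 2 * S) := by
      linear_combination (-(q * τ * S * T n)) * hq
    rw [e]
    convert this using 1; ring
  have h5 := (cg.rfl (f := ei 2 (4 * n))).mul h3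
  rw [mul_comm _ q, hq] at h5
  exact ((h1.mul cg.rfl).trans h4).trans h5


lemma fk_zero : fk 0 = 1 := by
  have := qp_ei 2 0 (by norm_num)
  simp [qp] at this
  simp [fk, sg, this]

lemma fk_succ (k : ℕ) : fk (k + 1) * (1 - X ^ (2 * k + 2)) =
    fk k * (X ^ (2 * k + 1) + X ^ (4 * k + 2)) := by
  have h1 := qp_ei 2 k (by norm_num)
  have h2 := qp_ei 2 (k + 1) (by norm_num)
  have h3 : qp (X ^ 2 : ℚ⟦X⟧) (k + 1) = qp (X ^ 2 : ℚ⟦X⟧) k * (1 - X ^ (2 * k + 2)) := by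
    simp only [qp, prod_range_succ]; ring
  have h4 : sg (X ^ 2 : ℚ⟦X⟧) X (k + 1) = sg (X ^ 2 : ℚ⟦X⟧) X k *
      (X ^ (2 * k + 1) + X ^ (4 * k + 2)) := by
    simp only [sg, prod_range_succ]; ring
  have h5 : ei 2 (k + 1) * (1 - X ^ (2 * k + 2)) = ei 2 k := by
    rw [h3] at h2
    linear_combination (- ei 2 (k + 1) * (1 - X ^ (2 * k + 2))) * h1 + ei 2 k * h2
  rw [fk, fk, h4]
  linear_combination sg (X ^ 2 : ℚ⟦X⟧) X k * (X ^ (2 * k + 1) + X ^ (4 * k + 2)) * h5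

/-- Truncated `F(q^{2j})`. -/
noncomputable def Fs (N j : ℕ) : ℚ⟦X⟧ := ∑ k ∈ range (N + 1), X ^ (2 * j * k) * fk k

lemma Fs_rec (N j : ℕ) :
    cg N (Fs N j) ((1 + X ^ (2 * j + 1)) * Fs N (j + 1) + X ^ (2 * j + 2) * Fs N (j + 2)) := by
  have h1 : Fs N j - Fs N (j + 1) =
      X ^ (2 * j + 1) * ∑ k ∈ range N, X ^ (2 * (j + 1) * k) * fk k +
      X ^ (2 * j + 2) * ∑ k ∈ range N, X ^ (2 * (j + 2) * k) * fk k := by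
    rw [Fs, Fs, ← sum_sub_distrib, sum_range_succ', mul_sum, mul_sum, ← sum_add_distrib]
    simp only [mul_zero, pow_zero, sub_self, add_zero]
    refine sum_congr rfl fun k _ => ?_
    linear_combination X ^ (2 * j * (k + 1)) * fk_succ k
  have h2 : Fs N j - ((1 + X ^ (2 * j + 1)) * Fs N (j + 1) + X ^ (2 * j + 2) * Fs N (j + 2)) =
      - (X ^ (2 * j + 1) * X ^ (2 * (j + 1) * N) + X ^ (2 * j + 2) * X ^ (2 * (j + 2) * N)) *
        fk N := by
    have e1 : Fs N (j + 1) = _ := sum_range_succ _ _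
    have e2 : Fs N (j + 2) = _ := sum_range_succ _ _
    linear_combination h1 - X ^ (2 * j + 1) * e1 - X ^ (2 * j + 2) * e2
  rw [cg, h2]
  exact Dvd.dvd.mul_left ((X_dvd_sg N).mul_right _) _

lemma Fs_large (N M j : ℕ) (h : M ≤ j) : cg M (Fs N j) 1 := by
  rw [cg, Fs, sum_range_succ', fk_zero]
  simp only [mul_zero, pow_zero, mul_one, add_sub_cancel_right]
  apply dvd_sum
  intro k _
  exact Dvd.dvd.mul_right (pow_dvd_pow X (by nlinarith)) _

/-- The Göllnitz–Gordon condition for finite sets. -/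
def GS (s : Finset ℕ) : Prop := ∀ a ∈ s, a + 1 ∉ s ∧ (Even a → a + 2 ∉ s)

open Classical in
/-- weight of a set -/
noncomputable def wt (s : Finset ℕ) : ℚ⟦X⟧ := if GS s then X ^ (∑ a ∈ s, a) else 0

/-- Generating function of Göllnitz–Gordon sets with parts in `[2j+1, 2M]`. -/
noncomputable def Cs (M j : ℕ) : ℚ⟦X⟧ := ∑ s ∈ (Ico (2 * j + 1) (2 * M + 1)).powerset, wt s

lemma wt_insert (a : ℕ) (t : Finset ℕ) (h : ∀ b ∈ t, a < b) (h1 : a + 1 ∉ t)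
    (h2 : Even a → a + 2 ∉ t) : wt (insert a t) = X ^ a * wt t := by
  have ha : a ∉ t := fun hh => lt_irrefl _ (h a hh)
  have : GS (insert a t) ↔ GS t := by
    constructor
    · intro hg b hb
      have := hg b (by simp [hb])
      simp only [mem_insert, not_or] at this
      exact ⟨this.1.2, fun e => (this.2 e).2⟩
    · intro hg b hb
      rw [mem_insert] at hb
      simp only [mem_insert, not_or]
      rcases hb with rfl | hb
      · exact ⟨⟨by omega, h1⟩, fun e => ⟨by omega, h2 e⟩⟩
      · have := h b hb
        exact ⟨⟨by omega, (hg b hb).1⟩, fun e => ⟨by omega, (hg b hb).2 e⟩⟩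
  rw [wt, wt, this, sum_insert ha, pow_add]
  split_ifs <;> simp

lemma wt_zero (s : Finset ℕ) (a : ℕ) (h : a ∈ s) (h1 : a + 1 ∈ s ∨ (Even a ∧ a + 2 ∈ s)) :
    wt s = 0 := by
  rw [wt, if_neg]
  intro hg
  have := hg a h
  tauto

lemma Cs_large (M j : ℕ) (h : M ≤ j) : Cs M j = 1 := by
  rw [Cs, Ico_eq_empty (by omega)]
  simp [wt, GS]

lemma Cs_rec (M j : ℕ) (h : j < M) :
    Cs M j = (1 + X ^ (2 * j + 1)) * Cs M (j + 1) + X ^ (2 * j + 2) * Cs M (j + 2) := by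
  set S := Ico (2 * (j + 1) + 1) (2 * M + 1) with hS
  have e : Ico (2 * j + 1) (2 * M + 1) = insert (2 * j + 1) (insert (2 * j + 2) S) := by
    ext x; simp [hS]; omega
  have n1 : 2 * j + 2 ∉ S := by simp [hS]; omega
  have n2 : 2 * j + 1 ∉ insert (2 * j + 2) S := by simp [hS]
  have a1 : ∑ t ∈ S.powerset, wt (insert (2 * j + 1) t) = X ^ (2 * j + 1) * Cs M (j + 1) := by
    rw [Cs, mul_sum]
    refine sum_congr rfl fun t ht => ?_
    have ht' := mem_powerset.1 ht
    have hb : ∀ b ∈ t, 2 * j + 3 ≤ b := fun b hb => by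
      have := ht' hb; simp [hS] at this; omega
    apply wt_insert
    · intro b hh; have := hb b hh; omega
    · intro hh; have := hb _ hh; omega
    · intro ⟨c, hc⟩; omega
  have a2 : ∑ t ∈ S.powerset, wt (insert (2 * j + 1) (insert (2 * j + 2) t)) = 0 :=
    sum_eq_zero fun t _ => wt_zero _ (2 * j + 1) (by simp) (Or.inl (by simp))
  have a3 : ∑ t ∈ S.powerset, wt (insert (2 * j + 2) t) = X ^ (2 * j + 2) * Cs M (j + 2) := by
    rw [Cs, mul_sum]
    symm
    have hsub : Ico (2 * (j + 2) + 1) (2 * M + 1) ⊆ S := by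
      intro x; simp [hS]; omega
    rw [← sum_subset (powerset_mono.2 hsub)]
    · refine sum_congr rfl fun t ht => ?_
      have ht' := mem_powerset.1 ht
      have hb : ∀ b ∈ t, 2 * j + 5 ≤ b := fun b hb => by
        have := ht' hb; simp at this; omega
      symm
      apply wt_insert
      · intro b hh; have := hb b hh; omega
      · intro hh; have := hb _ hh; omega
      · intro _ hh; have := hb _ hh; omega
    · intro t ht hn
      have ht' := mem_powerset.1 ht
      rw [mem_powerset] at hn
      obtain ⟨x, hx, hx'⟩ := not_subset.1 hn
      have := ht' hx
      simp [hS] at this hx'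
      apply wt_zero _ (2 * j + 2) (by simp)
      have : x = 2 * j + 3 ∨ x = 2 * j + 4 := by omega
      rcases this with rfl | rfl
      · left; simp [hx]
      · right; exact ⟨⟨j + 1, by ring⟩, by simp [hx]⟩
  rw [Cs, e, sum_powerset_insert n2, sum_powerset_insert n1, sum_powerset_insert n1, a1, a2, a3]
  change Cs M (j + 1) + _ + _ = _
  ring

lemma Cs_Fs (M N : ℕ) (hN : M ≤ N) : ∀ d j : ℕ, M ≤ j + d → cg M (Cs M j) (Fs N j) := by
  intro d
  induction d using Nat.strong_induction_on with
  | _ d ih =>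
    intro j hj
    by_cases h : M ≤ j
    · rw [Cs_large M j h]; exact (Fs_large N M j h).symm
    · have h1 := ih (d - 1) (by omega) (j + 1) (by omega)
      have h2 := ih (d - 1) (by omega) (j + 2) (by omega)
      rw [Cs_rec M j (by omega)]
      exact ((cg.rfl.mul h1).add (cg.rfl.mul h2)).trans ((Fs_rec N j).mono hN).symm

lemma C_T (n : ℕ) : cg n (Cs n 0 * T n) 1 := by
  have h := Cs_Fs n (4 * n) (by omega) n 0 (by omega)
  have h2 := F_T n
  have : Fs (4 * n) 0 = ∑ k ∈ range (4 * n + 1), fk k := by simp [Fs]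
  rw [← this] at h2
  exact (h.mul cg.rfl).trans h2

open Classical in
lemma coeff_Cs (n m : ℕ) : coeff m (Cs n 0) =
    (#{s ∈ (Ico 1 (2 * n + 1)).powerset | GS s ∧ ∑ a ∈ s, a = m} : ℚ) := by
  rw [Cs, map_sum, card_filter]
  push_cast
  refine sum_congr (by simp) fun s _ => ?_
  rw [wt]
  by_cases h : GS s
  · simp [h, coeff_X_pow, eq_comm]
  · simp [h]

/-! ### The product side -/

/-- partitions with parts in a set -/
def PS (S : Finset ℕ) (n : ℕ) : Finset n.Partition := univ.filter fun p => ∀ a ∈ p.parts, a ∈ S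

/-- generating function -/
noncomputable def Bs (S : Finset ℕ) : ℚ⟦X⟧ := PowerSeries.mk fun n => (#(PS S n) : ℚ)

lemma card_PS_insert (S : Finset ℕ) (a n : ℕ) (ha : 0 < a) (haS : a ∉ S) :
    #(PS (insert a S) n) = #(PS S n) + if a ≤ n then #(PS (insert a S) (n - a)) else 0 := by
  have e : #(PS (insert a S) n) = #(PS S n) + #{p ∈ PS (insert a S) n | a ∈ p.parts} := by
    rw [← card_filter_add_card_filter_not (s := PS (insert a S) n) (fun p => a ∈ p.parts), add_comm]
    congr 2
    ext p
    simp only [PS, mem_filter, mem_univ, true_and, mem_insert]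
    constructor
    · rintro ⟨h1, h2⟩ b hb
      rcases h1 b hb with rfl | h
      · exact absurd hb h2
      · exact h
    · intro h
      exact ⟨fun b hb => Or.inr (h b hb), fun hh => haS (h a hh)⟩
  rw [e]
  congr 1
  split_ifs with han
  · refine card_bij' (fun p hp => Nat.Partition.partitionWithPartEquiv ha han
      ⟨p, (mem_filter.1 hp).2⟩)
      (fun p _ => ((Nat.Partition.partitionWithPartEquiv ha han).symm p).1) ?_ ?_ ?_ ?_
    · intro p hp
      simp only [PS, mem_filter, mem_univ, true_and] at hp ⊢
      intro b hb
      exact hp.1 b (Multiset.mem_of_mem_erase hb)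
    · intro p hp
      have h2 := ((Nat.Partition.partitionWithPartEquiv ha han).symm p).2
      simp only [PS, mem_filter, mem_univ, true_and] at hp ⊢
      refine ⟨?_, h2⟩
      intro b hb
      have : b ∈ a ::ₘ p.parts := hb
      rw [Multiset.mem_cons] at this
      rcases this with rfl | h
      · simp
      · exact hp b h
    · intro p hp
      simp
    · intro p hp
      simp
  · rw [card_eq_zero, filter_eq_empty_iff]
    intro p _ hp
    exact han (Nat.Partition.le_of_mem_parts hp)

lemma Bs_insert (S : Finset ℕ) (a : ℕ) (ha : 0 < a) (haS : a ∉ S) :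
    Bs (insert a S) * (1 - X ^ a) = Bs S := by
  ext n
  rw [mul_sub, mul_one, map_sub, coeff_mul_X_pow', Bs, Bs, coeff_mk, coeff_mk, coeff_mk,
    card_PS_insert S a n ha haS]
  split_ifs <;> simp

lemma Bs_empty : Bs ∅ = 1 := by
  ext n
  rw [Bs, coeff_mk, coeff_one]
  rcases n with _ | n
  · simp [PS, filter_true_of_mem]
  · simp only [Nat.add_eq_zero_iff, one_ne_zero, and_false, if_false, Nat.cast_eq_zero,
      card_eq_zero, PS, filter_eq_empty_iff]
    intro p _ h
    have : p.parts = 0 := Multiset.eq_zero_of_forall_notMem fun a ha => by simpa using h a ha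
    have h2 := p.parts_sum
    rw [this] at h2
    simp at h2

lemma Bs_prod (S : Finset ℕ) (h0 : ∀ a ∈ S, 0 < a) : Bs S * ∏ a ∈ S, (1 - X ^ a) = 1 := by
  induction S using Finset.induction_on with
  | empty => simp [Bs_empty]
  | insert a S ha ih =>
    rw [prod_insert ha, ← mul_assoc, Bs_insert S a (h0 a (by simp)) ha]
    exact ih fun b hb => h0 b (by simp [hb])

/-- allowed parts -/
def Sn (n : ℕ) : Finset ℕ := {a ∈ range (8 * n) | a % 8 = 1 ∨ a % 8 = 4 ∨ a % 8 = 7}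

lemma T_eq (n : ℕ) : ∏ a ∈ Sn n, (1 - X ^ a : ℚ⟦X⟧) = T n := by
  rw [Sn, T, prod_filter]
  induction n with
  | zero => simp
  | succ n ih =>
    rw [show 8 * (n + 1) = 8 * n + 1 + 1 + 1 + 1 + 1 + 1 + 1 + 1 by ring]
    simp only [prod_range_succ]
    rw [ih]
    simp [Nat.add_mod, mul_assoc]

lemma Bs_T (n : ℕ) : Bs (Sn n) * T n = 1 := by
  rw [← T_eq]
  apply Bs_prod
  intro a ha
  simp [Sn] at ha
  omega

lemma Cs_Bs (n : ℕ) : cg n (Cs n 0) (Bs (Sn n)) := by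
  have h := (C_T n).mul (cg.rfl (f := Bs (Sn n)))
  have : Cs n 0 * T n * Bs (Sn n) = Cs n 0 := by
    linear_combination Cs n 0 * Bs_T n
  rwa [this, one_mul] at h

lemma cg_coeff {M m : ℕ} {f g : ℚ⟦X⟧} (h : cg M f g) (hm : m < M) : coeff m f = coeff m g := by
  have := PowerSeries.X_pow_dvd_iff.1 h m hm
  rw [map_sub] at this
  linarith

end ps

lemma B_eq (m n : ℕ) (h : m < n) : B m = #(PS (Sn n) m) := by
  rw [B, Nat.card_eq_fintype_card, Fintype.card_subtype]
  congr 1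
  ext p
  simp only [PS, mem_filter, mem_univ, true_and, Sn, mem_range]
  refine forall₂_congr fun a ha => ?_
  have := Nat.Partition.le_of_mem_parts ha
  constructor
  · intro h; exact ⟨by omega, h⟩
  · exact fun h => h.2

/-- the pairwise relation -/
def rel (a b : ℕ) : Prop := 2 ≤ b - a ∧ (Even b → 3 ≤ b - a)

lemma isGG_iff {n : ℕ} (p : n.Partition) : IsGG p ↔ (sortedParts p).Pairwise rel := by
  have : IsGG p ↔ (sortedParts p).IsChain rel := by
    rw [List.isChain_iff_getElem]
    rfl
  rw [this]
  have : IsTrans ℕ rel := ⟨by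
    rintro a b c ⟨h1, h2⟩ ⟨h3, h4⟩
    exact ⟨by omega, fun _ => by omega⟩⟩
  exact List.isChain_iff_pairwise

lemma isGG_iff' {n : ℕ} (p : n.Partition) : IsGG p ↔ p.parts.Nodup ∧ GS p.parts.toFinset := by
  rw [isGG_iff]
  have hs : (sortedParts p).Pairwise (· ≤ ·) := Multiset.pairwise_sort _ _
  have hc : ((sortedParts p : List ℕ) : Multiset ℕ) = p.parts := Multiset.sort_eq _ _
  rw [← hc]
  generalize sortedParts p = l at *
  clear hc
  simp only [Multiset.coe_nodup, GS]
  simp only [List.mem_toFinset, Multiset.mem_toFinset, Multiset.mem_coe]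
  induction l with
  | nil => simp
  | cons a l ih =>
    rw [List.pairwise_cons] at hs ⊢
    have ih' : l.Pairwise rel ↔ l.Nodup ∧ ∀ a ∈ l, a + 1 ∉ l ∧ (Even a → a + 2 ∉ l) := ih hs.2
    rw [ih', List.nodup_cons]
    simp only [List.mem_cons]
    constructor
    · rintro ⟨h1, h2, h3⟩
      refine ⟨⟨fun h => ?_, h2⟩, ?_⟩
      · have := (h1 a h).1; omega
      · rintro b (rfl | hb)
        · refine ⟨?_, fun e => ?_⟩
          · rintro (h | h)
            · omega
            · have := (h1 _ h).1; omega
          · rintro (h | h)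
            · omega
            · have := (h1 _ h).2 (by simpa [Nat.even_add] using e); omega
        · have hb' := (h1 b hb).1
          refine ⟨?_, fun e => ?_⟩
          · rintro (h | h)
            · omega
            · exact (h3 b hb).1 h
          · rintro (h | h)
            · omega
            · exact (h3 b hb).2 e h
    · rintro ⟨⟨h1, h2⟩, h3⟩
      refine ⟨fun b hb => ?_, h2, fun b hb => ?_⟩
      · have hab := hs.1 b hb
        have k0 : a ≠ b := fun h => h1 (h ▸ hb)
        have k1 : b ≠ a + 1 := fun h => (h3 a (Or.inl rfl)).1 (Or.inr (h ▸ hb))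
        have k2 : Even b → b ≠ a + 2 := fun e h => by
          subst h
          exact (h3 a (Or.inl rfl)).2 (by simpa [Nat.even_add] using e) (Or.inr hb)
        exact ⟨by omega, fun e => by have := k2 e; omega⟩
      · have := h3 b (Or.inr hb)
        exact ⟨fun h => this.1 (Or.inr h), fun e h => this.2 e (Or.inr h)⟩

open Classical in
lemma A_eq (m n : ℕ) (h : m < n) :
    A m = #{s ∈ (Ico 1 (2 * n + 1)).powerset | GS s ∧ ∑ a ∈ s, a = m} := by
  rw [A, Nat.card_eq_fintype_card, Fintype.card_subtype]
  refine card_bij (fun p _ => p.parts.toFinset) ?_ ?_ ?_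
  · intro p hp
    simp only [mem_filter, mem_univ, true_and, isGG_iff'] at hp
    simp only [mem_filter, mem_powerset]
    refine ⟨?_, hp.2, ?_⟩
    · intro a ha
      rw [Multiset.mem_toFinset] at ha
      have := Nat.Partition.le_of_mem_parts ha
      have := p.parts_pos ha
      simp; omega
    · have h2 := p.parts_sum
      change Finset.sum p.parts.toFinset id = m
      rw [← Finset.sum_val, Multiset.toFinset_val, hp.1.dedup]
      exact h2
  · intro p hp p' hp' he
    simp only [mem_filter, mem_univ, true_and, isGG_iff'] at hp hp'
    apply Nat.Partition.ext
    have := congrArg Finset.val he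
    simpa only [Multiset.toFinset_val, hp.1.dedup, hp'.1.dedup] using this
  · intro s hs
    simp only [mem_filter, mem_powerset] at hs
    obtain ⟨h1, h2, h3⟩ := hs
    refine ⟨⟨s.val, fun {i} hi => ?_, ?_⟩, ?_, ?_⟩
    · have := h1 hi; simp at this; omega
    · rw [Finset.sum_val]; exact h3
    · simp only [mem_filter, mem_univ, true_and, isGG_iff']
      exact ⟨s.nodup, by simpa using h2⟩
    · simp

end GG

/-- **Göllnitz–Gordon partition theorem**: `A n = B n` for all `n`. -/
theorem gollnitz_gordon (n : ℕ) : A n = B n := by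
  have h := GG.cg_coeff (GG.Cs_Bs (n + 1)) (Nat.lt_succ_self n)
  rw [GG.coeff_Cs, GG.Bs, PowerSeries.coeff_mk] at h
  rw [GG.A_eq n (n + 1) (Nat.lt_succ_self n), GG.B_eq n (n + 1) (Nat.lt_succ_self n)]
  exact_mod_cast h
end

section
/- (Andrews) For every nonnegative integer n, C(n) = B(n), where C(n) is the number of signed partitions of n in which the negative parts are distinct, odd, and smaller in magnitude than twice the number of positive parts, and the positive parts are even and each of magnitude at least twice the number of positive parts; and B(n) is the number of partitions of n into parts congruent to 1, 4, or 7 modulo 8. -/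
/-- A *signed partition* of `n` is a pair of multisets of positive integers
`(π, ν)` (the positive and negative parts) with `|π| - |ν| = n`.  It is an
*Andrews signed Göllnitz–Gordon partition* if the negative parts are distinct,
odd, and smaller in magnitude than twice the number of positive parts, while the
positive parts are even and each at least twice the number of positive parts. -/
def IsSignedGG (n : ℕ) (s : Multiset ℕ × Multiset ℕ) : Prop :=
  (∀ a ∈ s.1, 0 < a) ∧ (∀ a ∈ s.2, 0 < a) ∧
  (∀ a ∈ s.1, Even a ∧ 2 * Multiset.card s.1 ≤ a) ∧
  s.2.Nodup ∧ (∀ a ∈ s.2, Odd a ∧ a < 2 * Multiset.card s.1) ∧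
  (s.1.sum : ℤ) - (s.2.sum : ℤ) = (n : ℤ)

/-- `C n` is the number of Andrews signed Göllnitz–Gordon partitions of `n`. -/
noncomputable def C (n : ℕ) : ℕ :=
  Nat.card {s : Multiset ℕ × Multiset ℕ // IsSignedGG n s}

open Finset

/-- Gaussian binomial coefficients. -/
def qb {R : Type*} [CommRing R] (x : R) : ℕ → ℕ → R
  | _, 0 => 1
  | 0, _ + 1 => 0
  | n + 1, k + 1 => x ^ (k + 1) * qb x n (k + 1) + qb x n k

/-- The Pochhammer product. -/
def qP {R : Type*} [CommRing R] (x : R) (n : ℕ) : R := ∏ i ∈ range n, (1 - x ^ (i + 1))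

/-- Theta coefficients. -/
def th {R : Type*} [CommRing R] (a b : R) (r : ℕ) : R :=
  if r = 0 then 1 else (-1) ^ r * (a * b) ^ (r.choose 2) * (a ^ r + b ^ r)

section ring
variable {R : Type*} [CommRing R]

lemma qb_zero (x : R) (n : ℕ) : qb x n 0 = 1 := by cases n <;> rfl

lemma qb_succ (x : R) (n k : ℕ) :
    qb x (n + 1) (k + 1) = x ^ (k + 1) * qb x n (k + 1) + qb x n k := rfl

lemma qb_gt (x : R) : ∀ (n k : ℕ), n < k → qb x n k = 0
  | 0, 0, h => by omega
  | 0, k + 1, _ => rfl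
  | n + 1, 0, h => by omega
  | n + 1, k + 1, h => by
    rw [qb_succ, qb_gt x n (k + 1) (by omega), qb_gt x n k (by omega)]; simp

lemma qb_self (x : R) (n : ℕ) : qb x n n = 1 := by
  induction n with
  | zero => rfl
  | succ n ih => rw [qb_succ, ih, qb_gt x n (n + 1) (by omega)]; simp

lemma qP_succ (x : R) (n : ℕ) : qP x (n + 1) = qP x n * (1 - x ^ (n + 1)) := by
  simp [qP, prod_range_succ]

lemma qP_zero (x : R) : qP x 0 = 1 := by simp [qP]

lemma qb_mul (x : R) (s : ℕ) : ∀ (n k : ℕ), n + k = s →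
    qb x (n + k) k * qP x k * qP x n = qP x (n + k) := by
  induction s with
  | zero =>
    intro n k h
    obtain ⟨rfl, rfl⟩ : n = 0 ∧ k = 0 := by omega
    simp [qb_zero, qP_zero]
  | succ s ih =>
    intro n k h
    rcases k with _ | k
    · simp [qb_zero, qP_zero]
    rcases n with _ | n
    · simp [qb_self, qP_zero]
    have h1 := ih n (k + 1) (by omega)
    have h2 := ih (n + 1) k (by omega)
    have e1 : n + (k + 1) = n + 1 + k := by omega
    rw [e1] at h1
    have e2 : n + 1 + (k + 1) = (n + 1 + k) + 1 := by omega
    rw [e2, qb_succ, qP_succ x (n + 1 + k)]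
    have p1 := qP_succ x k
    have p2 := qP_succ x n
    have : x ^ (n + 1 + k + 1) = x ^ (n + 1) * x ^ (k + 1) := by ring
    rw [this]
    calc _ = x ^ (k + 1) * (1 - x ^ (n + 1)) * (qb x (n + 1 + k) (k + 1) * qP x (k + 1) * qP x n)
          + (1 - x ^ (k + 1)) * (qb x (n + 1 + k) k * qP x k * qP x (n + 1)) := by
            rw [p1, p2]; ring
      _ = _ := by rw [h1, h2]; ring

lemma qb_mul' (x : R) {N k : ℕ} (h : k ≤ N) :
    qb x N k * qP x k * qP x (N - k) = qP x N := by
  have := qb_mul x N (N - k) k (by omega)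
  rwa [Nat.sub_add_cancel h] at this

/-- The terminating summation. -/
lemma qvand (x s : R) (M : ℕ) : ∀ b v : R,
    ∑ k ∈ range (M + 1), qb x M k * (∏ i ∈ range k, x ^ i * (b * x ^ i - v)) *
      (∏ i ∈ Ico k M, (s - b * x ^ i)) = ∏ i ∈ range M, (s - v * x ^ i) := by
  induction M with
  | zero => intro b v; simp [qb_zero]
  | succ M ih =>
    intro b v
    set w : ℕ → R := fun k => ∏ i ∈ range k, x ^ i * (b * x ^ i - v) with hw
    have hA : ∑ k ∈ range (M + 1 + 1), qb x (M + 1) k * w k * (∏ i ∈ Ico k (M + 1), (s - b * x ^ i))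
        = ∑ k ∈ range (M + 1), (x ^ k * qb x M k * w k * (∏ i ∈ Ico k (M + 1), (s - b * x ^ i))
          + qb x M k * w (k + 1) * (∏ i ∈ Ico (k + 1) (M + 1), (s - b * x ^ i))) := by
      rw [sum_add_distrib, sum_range_succ' _ (M + 1)]
      simp only [qb_succ, qb_zero, add_mul, sum_add_distrib]
      have := sum_range_succ' (fun k => x ^ k * qb x M k * w k *
        (∏ i ∈ Ico k (M + 1), (s - b * x ^ i))) (M + 1)
      rw [sum_range_succ] at this
      simp only [qb_gt x M (M + 1) (by omega), qb_zero] at this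
      simp only [mul_zero, zero_mul, add_zero, pow_zero, one_mul] at this
      rw [this]; simp only [one_mul]; ring
    rw [hA, prod_range_succ']
    have hB := ih (b * x) (v * x)
    have hC : ∏ i ∈ range M, (s - v * x ^ (i + 1)) = ∏ i ∈ range M, (s - v * x * x ^ i) :=
      prod_congr rfl fun i _ => by ring
    rw [hC, ← hB, sum_mul]
    refine sum_congr rfl fun k hk => ?_
    have hk' : k < M + 1 := mem_range.1 hk
    have h1 : ∏ i ∈ range k, x ^ i * (b * x * x ^ i - v * x) = x ^ k * w k := by
      simp only [hw]
      rw [← card_range k, ← prod_const, card_range, ← prod_mul_distrib]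
      exact prod_congr rfl fun i _ => by ring
    have h2 : ∏ i ∈ Ico k M, (s - b * x * x ^ i) = ∏ i ∈ Ico (k + 1) (M + 1), (s - b * x ^ i) := by
      rw [← prod_Ico_add' (fun i => s - b * x ^ i) k M 1]
      exact prod_congr rfl fun i _ => by ring
    have h3 : ∏ i ∈ Ico k (M + 1), (s - b * x ^ i)
        = (s - b * x ^ k) * ∏ i ∈ Ico (k + 1) (M + 1), (s - b * x ^ i) :=
      prod_eq_prod_Ico_succ_bot hk' _
    have h4 : w (k + 1) = w k * (x ^ k * (b * x ^ k - v)) := by simp [hw, prod_range_succ]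
    rw [h1, h2, h3, h4]; ring

lemma qbinom_thm (x s v : R) (M : ℕ) :
    ∑ k ∈ range (M + 1), qb x M k * ((-v) ^ k * x ^ (k.choose 2)) * s ^ (M - k)
      = ∏ i ∈ range M, (s - v * x ^ i) := by
  rw [← qvand x s M 0 v]
  refine sum_congr rfl fun k _ => ?_
  have : ∏ i ∈ range k, x ^ i * (0 * x ^ i - v) = (-v) ^ k * x ^ (k.choose 2) := by
    rw [prod_mul_distrib, prod_pow_eq_pow_sum, sum_range_id, Nat.choose_two_right]
    simp [mul_comm]
  rw [this]; simp

lemma sum_sym {f : ℕ → R} (N : ℕ) : ∑ k ∈ range (2 * N + 1), f k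
    = ∑ r ∈ range (N + 1), (if r = 0 then f N else f (N - r) + f (N + r)) := by
  have h1 : 2 * N + 1 = N + (N + 1) := by omega
  rw [h1, sum_range_add, ← sum_range_reflect, sum_range_succ' _ N, sum_range_succ' _ N]
  simp only [Nat.add_eq_zero_iff, one_ne_zero, and_false, if_false, if_true, sum_add_distrib]
  rw [add_zero, ← add_assoc]
  congr 2
  exact sum_congr rfl fun i _ => by congr 1; omega

lemma choose_two_add (a b : ℕ) : (a + b).choose 2 = a.choose 2 + b.choose 2 + a * b := by
  induction b with
  | zero => simp
  | succ b ih =>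
    rw [← add_assoc, Nat.choose_succ_succ' (a + b) 1, Nat.choose_succ_succ' b 1, ih]
    simp; ring

lemma jtp [IsDomain R] (a b : R) (ha : a ≠ 0) (hb : b ≠ 0) (hP : ∀ n, qP (a * b) n ≠ 0) (N : ℕ) :
    ∑ r ∈ range (N + 1), th a b r * qb (a * b) (2 * N) (N + r)
      = ∏ i ∈ range N, ((1 - a * (a * b) ^ i) * (1 - b * (a * b) ^ i)) := by
  set y := a * b with hy
  have hy0 : y ≠ 0 := mul_ne_zero ha hb
  set c : R := (-1) ^ N * a ^ N * y ^ (N.choose 2) * y ^ (N * N) with hc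
  have hc0 : c ≠ 0 := by simp [hc, ha, hy0]
  apply mul_left_cancel₀ hc0
  have h := qbinom_thm y (y ^ N) a (2 * N)
  have hsym : ∀ r ≤ N, qb y (2 * N) (N - r) = qb y (2 * N) (N + r) := by
    intro r hr
    have h1 := qb_mul' y (N := 2 * N) (k := N - r) (by omega)
    have h2 := qb_mul' y (N := 2 * N) (k := N + r) (by omega)
    rw [show 2 * N - (N - r) = N + r by omega] at h1
    rw [show 2 * N - (N + r) = N - r by omega] at h2
    apply mul_right_cancel₀ (hP (N - r))
    apply mul_right_cancel₀ (hP (N + r))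
    rw [h1, ← h2]; ring
  rw [sum_sym] at h
  have hL : ∑ r ∈ range (N + 1), (if r = 0 then
      qb y (2 * N) N * ((-a) ^ N * y ^ (N.choose 2)) * (y ^ N) ^ (2 * N - N) else
      qb y (2 * N) (N - r) * ((-a) ^ (N - r) * y ^ ((N - r).choose 2)) * (y ^ N) ^ (2 * N - (N - r))
      + qb y (2 * N) (N + r) * ((-a) ^ (N + r) * y ^ ((N + r).choose 2))
        * (y ^ N) ^ (2 * N - (N + r)))
      = c * ∑ r ∈ range (N + 1), th a b r * qb y (2 * N) (N + r) := by
    rw [mul_sum]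
    refine sum_congr rfl fun r hr => ?_
    have hr' : r ≤ N := by have := mem_range.1 hr; omega
    unfold th
    split_ifs with h0
    · subst h0
      rw [show 2 * N - N = N by omega, hc, neg_pow a, ← pow_mul]; simp; ring
    · obtain ⟨m, rfl⟩ := Nat.exists_eq_add_of_le' hr'
      rw [hsym r hr']
      rw [show m + r - r = m by omega, show 2 * (m + r) - m = m + r + r by omega,
        show 2 * (m + r) - (m + r + r) = m by omega, hc, choose_two_add (m + r) r,
        choose_two_add m r, neg_pow a, neg_pow a (m + r + r)]
      have e1 : (y ^ (m + r)) ^ (m + r + r) = y ^ ((m + r) * (m + r)) * y ^ (m * r) * a ^ r * b ^ r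
          * (y ^ (r.choose 2)) ^ 2 := by
        have : (y ^ (r.choose 2)) ^ 2 * y ^ r = y ^ (r * r) := by
          rw [← pow_mul, ← pow_add]; congr 1
          have := choose_two_add r r
          have h3 : (r.choose 2) * 2 = r * (r - 1) := by
            rw [Nat.choose_two_right]
            exact Nat.div_mul_cancel (Nat.even_mul_pred_self r).two_dvd
          rw [h3]; rcases r with _ | r
          · simp
          · simp; ring
        have h5 : a ^ r * b ^ r = y ^ r := by rw [hy, mul_pow]
        rw [mul_assoc (_ * _) (a ^ r), h5, mul_assoc, mul_comm (y ^ r), this]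
        rw [← pow_mul]; ring
      have e2 : ((-1 : R)) ^ m = (-1) ^ (m + r) * (-1) ^ r := by
        rw [pow_add, mul_assoc, ← mul_pow]; simp
      rw [e1, e2, hy]; ring
  rw [← hL, h]
  rw [show 2 * N = N + N by omega, prod_range_add, prod_mul_distrib]
  have h1 : ∏ i ∈ range N, (y ^ N - a * y ^ i)
      = (-a) ^ N * y ^ (N.choose 2) * ∏ i ∈ range N, (1 - b * y ^ i) := by
    have : y ^ (N.choose 2) = ∏ i ∈ range N, y ^ i := by
      rw [prod_pow_eq_pow_sum, sum_range_id, Nat.choose_two_right]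
    rw [this, ← prod_range_reflect (fun i => y ^ i)]
    have hpw : (-a) ^ N = ∏ i ∈ range N, (-a) := by simp
    rw [hpw, ← prod_mul_distrib, ← prod_mul_distrib, ← prod_range_reflect]
    refine prod_congr rfl fun i hi => ?_
    have hi' := mem_range.1 hi
    have : y ^ N = y ^ (N - 1 - i) * (a * b) * y ^ i := by
      rw [← hy, ← pow_succ, ← pow_add]; congr 1; omega
    rw [this]; ring
  have h2 : ∏ i ∈ range N, (y ^ N - a * y ^ (N + i))
      = y ^ (N * N) * ∏ i ∈ range N, (1 - a * y ^ i) := by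
    have hpw : (y ^ N) ^ N = ∏ i ∈ range N, y ^ N := by simp
    rw [pow_mul, hpw, ← prod_mul_distrib]
    exact prod_congr rfl fun i _ => by ring
  rw [h1, h2, hc, neg_pow a]; ring

end ring
/-- Bailey weights. -/
def bW {R : Type*} [CommRing R] (x u : R) (n : ℕ) : R := ∏ i ∈ range n, x ^ i * (x ^ (i + 1) - u)

section fld
variable {K : Type*} [Field K]

lemma vand_r (x u : K) (hP : ∀ n, qP x n ≠ 0) (M r : ℕ) :
    ∑ n ∈ Ico r (M + r + 1), bW x u n / (qP x (M + r - n) * (qP x (n - r) * qP x (n + r)))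
      = bW x u r * (∏ i ∈ Ico r (M + r), (1 - u * x ^ i)) / (qP x M * qP x (M + r + r)) := by
  rw [sum_Ico_eq_sum_range, show M + r + 1 - r = M + 1 by omega]
  have h := qvand x 1 M (x ^ (2 * r + 1)) (u * x ^ r)
  have h2 : ∏ i ∈ Ico r (M + r), (1 - u * x ^ i) = ∏ i ∈ range M, (1 - u * x ^ r * x ^ i) := by
    rw [prod_Ico_eq_prod_range, show M + r - r = M by omega]
    exact prod_congr rfl fun i _ => by ring
  rw [h2, ← h, mul_sum, sum_div]
  refine sum_congr rfl fun k hk => ?_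
  have hk' : k ≤ M := by have := mem_range.1 hk; omega
  have hW : bW x u (r + k) = bW x u r *
      ∏ i ∈ range k, x ^ i * (x ^ (2 * r + 1) * x ^ i - u * x ^ r) := by
    unfold bW
    rw [prod_range_add]
    congr 1
    exact prod_congr rfl fun i _ => by ring
  have hI : (∏ i ∈ Ico k M, (1 - x ^ (2 * r + 1) * x ^ i)) * qP x (r + k + r)
      = qP x (M + r + r) := by
    unfold qP
    rw [show M + r + r = (r + k + r) + (M - k) by omega, prod_range_add _ (r + k + r),
      prod_Ico_eq_prod_range, mul_comm]
    congr 1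
    exact prod_congr rfl fun i _ => by ring
  have hq := qb_mul' x hk'
  rw [hW, show M + r - (r + k) = M - k by omega, show r + k - r = k by omega, ← hI, ← hq]
  have i1 := hP k
  have i2 := hP (M - k)
  have i3 := hP (r + k + r)
  have i4 : qb x M k ≠ 0 := by
    intro h0; rw [h0] at hq; apply hP M; rw [← hq]; ring
  have i5 : (∏ i ∈ Ico k M, (1 - x ^ (2 * r + 1) * x ^ i)) ≠ 0 := by
    intro h0; rw [h0] at hI; apply hP (M + r + r); rw [← hI]; ring
  field_simp
  congr 1
  exact prod_congr rfl fun i _ => by ring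

lemma bailey (x u : K) (hP : ∀ n, qP x n ≠ 0) (A : ℕ → K) (N : ℕ) :
    ∑ n ∈ range (N + 1), bW x u n / qP x (N - n) *
      (∑ r ∈ range (n + 1), A r / (qP x (n - r) * qP x (n + r)))
    = ∑ r ∈ range (N + 1), A r * (bW x u r * (∏ i ∈ Ico r N, (1 - u * x ^ i))) /
        (qP x (N - r) * qP x (N + r)) := by
  simp only [mul_sum]
  rw [sum_comm' (t' := range (N + 1)) (s' := fun r => Ico r (N + 1))
    (by intro a b; simp only [mem_range, mem_Ico]; omega)]
  refine sum_congr rfl fun r hr => ?_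
  have hr' : r ≤ N := by have := mem_range.1 hr; omega
  obtain ⟨M, rfl⟩ := Nat.exists_eq_add_of_le' hr'
  have := vand_r x u hP M r
  rw [show M + r - r = M by omega, mul_div_assoc, ← this, mul_sum]
  refine sum_congr rfl fun n _ => ?_
  rw [div_mul_div_comm, mul_div_assoc']
  congr 1
  ring

lemma jtp_field (a b : K) (ha : a ≠ 0) (hb : b ≠ 0) (hP : ∀ n, qP (a * b) n ≠ 0) (N : ℕ) :
    ∑ r ∈ range (N + 1), th a b r / (qP (a * b) (N - r) * qP (a * b) (N + r))
      = (∏ i ∈ range N, ((1 - a * (a * b) ^ i) * (1 - b * (a * b) ^ i))) / qP (a * b) (2 * N) := by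
  rw [← jtp a b ha hb hP N, sum_div]
  refine sum_congr rfl fun r hr => ?_
  have hr' : r ≤ N := by have := mem_range.1 hr; omega
  have h2 := qb_mul' (a * b) (N := 2 * N) (k := N + r) (by omega)
  rw [show 2 * N - (N + r) = N - r by omega] at h2
  have i1 := hP (N - r)
  have i2 := hP (N + r)
  have i4 : qb (a * b) (2 * N) (N + r) ≠ 0 := by
    intro h0; rw [h0] at h2; apply hP (2 * N); rw [← h2]; ring
  rw [← h2]
  field_simp

lemma bailey1 (x : K) (hx : x ≠ 0) (hP : ∀ n, qP x n ≠ 0) (N : ℕ) :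
    ∑ r ∈ range (N + 1), th 1 x r * x ^ (r * r) / (qP x (N - r) * qP x (N + r)) = 1 / qP x N := by
  have h := bailey x 0 hP (th 1 x) N
  have hW : ∀ r, bW x 0 r = x ^ (r * r) := by
    intro r
    induction r with
    | zero => simp [bW]
    | succ r ih =>
      unfold bW at ih ⊢
      rw [prod_range_succ, ih]; ring
  simp only [hW, zero_mul, sub_zero, prod_const_one, mul_one] at h
  rw [← h, sum_range_succ']
  have hz : ∀ n, ∑ r ∈ range (n + 1), th 1 x r / (qP x (n - r) * qP x (n + r))
      = if n = 0 then 1 else 0 := by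
    intro n
    have := jtp_field 1 x one_ne_zero hx (by simpa using hP) n
    simp only [one_mul] at this
    rw [this]
    rcases n with _ | n
    · simp [qP_zero]
    · rw [prod_range_succ']; simp
  simp only [hz]
  simp

lemma bailey2 (q : K) (hx : q ≠ 0) (hP : ∀ n, qP (q ^ 2) n ≠ 0) (N : ℕ) :
    ∑ n ∈ range (N + 1), bW (q ^ 2) (-q) n / qP (q ^ 2) (N - n) * (1 / qP (q ^ 2) n)
    = (∏ i ∈ range N, (1 + q ^ (2 * i + 1))) * ∑ r ∈ range (N + 1), th (q ^ 3) (q ^ 5) r /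
        (qP (q ^ 2) (N - r) * qP (q ^ 2) (N + r)) := by
  have h := bailey (q ^ 2) (-q) hP (fun r => th 1 (q ^ 2) r * (q ^ 2) ^ (r * r)) N
  simp only [bailey1 (q ^ 2) (pow_ne_zero 2 hx) hP] at h
  rw [h, mul_sum]
  refine sum_congr rfl fun r hr => ?_
  have hr' : r ≤ N := by have := mem_range.1 hr; omega
  rw [mul_div_assoc']
  congr 1
  have hW : bW (q ^ 2) (-q) r = q ^ (r * r) * ∏ i ∈ range r, (1 + q ^ (2 * i + 1)) := by
    clear hr hr'
    induction r with
    | zero => simp [bW]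
    | succ r ih =>
      unfold bW at ih ⊢
      rw [prod_range_succ, ih, prod_range_succ]; ring
  have h3 : ∏ i ∈ Ico r N, (1 - -q * (q ^ 2) ^ i) = ∏ i ∈ Ico r N, (1 + q ^ (2 * i + 1)) :=
    prod_congr rfl fun i _ => by ring
  rw [hW, h3, ← prod_range_mul_prod_Ico _ hr']
  have ht : th 1 (q ^ 2) r * (q ^ 2) ^ (r * r) * q ^ (r * r) = th (q ^ 3) (q ^ 5) r := by
    unfold th
    split_ifs with h0
    · subst h0; simp
    · have : 2 * r.choose 2 + r = r * r := by
        have h3 : (r.choose 2) * 2 = r * (r - 1) := by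
          rw [Nat.choose_two_right]
          exact Nat.div_mul_cancel (Nat.even_mul_pred_self r).two_dvd
        rcases r with _ | r
        · simp
        · rw [mul_comm 2, h3]; simp; ring
      rw [← this]
      ring
  rw [← ht]; ring

lemma bailey3 (q : K) (hx : q ≠ 0) (hP : ∀ n, qP (q ^ 2) n ≠ 0) (N : ℕ) :
    (∑ n ∈ range (N + 1), bW (q ^ 2) (-q) n * qb (q ^ 2) N n) * qP (q ^ 2) (2 * N)
    = (∏ i ∈ range N, (1 + q ^ (2 * i + 1))) * qP (q ^ 2) N *
      ∑ r ∈ range (N + 1), th (q ^ 3) (q ^ 5) r * qb (q ^ 2) (2 * N) (N + r) := by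
  have h := bailey2 q hx hP N
  have h1 : ∑ n ∈ range (N + 1), bW (q ^ 2) (-q) n * qb (q ^ 2) N n = qP (q ^ 2) N *
      ∑ n ∈ range (N + 1), bW (q ^ 2) (-q) n / qP (q ^ 2) (N - n) * (1 / qP (q ^ 2) n) := by
    rw [mul_sum]
    refine sum_congr rfl fun r hr => ?_
    have hr' : r ≤ N := by have := mem_range.1 hr; omega
    have h2 := qb_mul' (q ^ 2) hr'
    rw [← h2]
    have i1 := hP (N - r)
    have i2 := hP r
    field_simp
  have h2 : ∑ r ∈ range (N + 1), th (q ^ 3) (q ^ 5) r * qb (q ^ 2) (2 * N) (N + r) =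
      qP (q ^ 2) (2 * N) * ∑ r ∈ range (N + 1), th (q ^ 3) (q ^ 5) r /
        (qP (q ^ 2) (N - r) * qP (q ^ 2) (N + r)) := by
    rw [mul_sum]
    refine sum_congr rfl fun r hr => ?_
    have hr' : r ≤ N := by have := mem_range.1 hr; omega
    have h2 := qb_mul' (q ^ 2) (N := 2 * N) (k := N + r) (by omega)
    rw [show 2 * N - (N + r) = N - r by omega] at h2
    rw [← h2]
    have i1 := hP (N - r)
    have i2 := hP (N + r)
    field_simp
  rw [h1, h2, h]; ring

end fld

section transfer
variable {R S : Type*} [CommRing R] [CommRing S] (f : R →+* S)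

lemma map_qb (x : R) : ∀ n k, f (qb x n k) = qb (f x) n k
  | n, 0 => by simp [qb_zero]
  | 0, k + 1 => by simp [qb]
  | n + 1, k + 1 => by simp [qb_succ, map_qb x n]

lemma map_qP (x : R) (n : ℕ) : f (qP x n) = qP (f x) n := by simp [qP]

lemma map_bW (x u : R) (n : ℕ) : f (bW x u n) = bW (f x) (f u) n := by simp [bW]

lemma map_th (a b : R) (n : ℕ) : f (th a b n) = th (f a) (f b) n := by
  unfold th; split_ifs <;> simp

open Polynomial in
lemma qP_X_ne (m : ℕ) (n : ℕ) : qP ((X : ℤ[X]) ^ (m + 1)) n ≠ 0 := by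
  intro h
  have := congrArg (fun p : ℤ[X] => p.eval 0) h
  simp [qP, eval_prod] at this

open Polynomial in
lemma bailey_ring (q : R) (N : ℕ) :
    (∑ n ∈ range (N + 1), bW (q ^ 2) (-q) n * qb (q ^ 2) N n) * qP (q ^ 2) (2 * N)
    = (∏ i ∈ range N, (1 + q ^ (2 * i + 1))) * qP (q ^ 2) N *
      ∑ r ∈ range (N + 1), th (q ^ 3) (q ^ 5) r * qb (q ^ 2) (2 * N) (N + r) := by
  have h0 : (∑ n ∈ range (N + 1), bW ((X : ℤ[X]) ^ 2) (-X) n * qb (X ^ 2) N n) * qP (X ^ 2) (2 * N)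
    = (∏ i ∈ range N, (1 + X ^ (2 * i + 1))) * qP (X ^ 2) N *
      ∑ r ∈ range (N + 1), th (X ^ 3) (X ^ 5) r * qb (X ^ 2) (2 * N) (N + r) := by
    have hinj := IsFractionRing.injective ℤ[X] (FractionRing ℤ[X])
    apply hinj
    have := bailey3 (algebraMap ℤ[X] (FractionRing ℤ[X]) X)
      (by rw [Ne, map_eq_zero_iff _ hinj]; exact X_ne_zero)
      (by intro n; rw [← map_pow, ← map_qP, Ne, map_eq_zero_iff _ hinj]; exact qP_X_ne 1 n) N
    simpa [map_qb, map_qP, map_bW, map_th] using this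
  have := congrArg (eval₂RingHom (Int.castRingHom R) q) h0
  simpa only [map_mul, map_sum, map_prod, map_add, map_one, map_pow, map_neg, map_qb, map_qP,
    map_bW, map_th, coe_eval₂RingHom, eval₂_X] using this

open Polynomial in
lemma jtp_ring (q : R) (N : ℕ) :
    ∑ r ∈ range (N + 1), th (q ^ 3) (q ^ 5) r * qb (q ^ 8) (2 * N) (N + r)
      = ∏ i ∈ range N, ((1 - q ^ (8 * i + 3)) * (1 - q ^ (8 * i + 5))) := by
  have h0 := jtp ((X : ℤ[X]) ^ 3) (X ^ 5) (pow_ne_zero _ X_ne_zero) (pow_ne_zero _ X_ne_zero)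
    (by intro n; rw [← pow_add]; exact qP_X_ne 7 n) N
  have := congrArg (eval₂RingHom (Int.castRingHom R) q) h0
  simp only [map_mul, map_sum, map_prod, map_sub, map_one, map_pow, map_qb, 
    map_th, coe_eval₂RingHom, eval₂_X] at this
  rw [← pow_add] at this
  rw [this]
  exact prod_congr rfl fun i _ => by ring

end transfer
section nilp
variable {R : Type*} [CommRing R]

lemma prod_stable {q : R} {D : ℕ} (hq : q ^ D = 0) (c : R) (e : ℕ → ℕ) (he : ∀ i, i ≤ e i)
    {N M : ℕ} (hN : D ≤ N) (hM : N ≤ M) :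
    ∏ i ∈ range M, (1 + c * q ^ (e i)) = ∏ i ∈ range N, (1 + c * q ^ (e i)) := by
  rw [← prod_range_mul_prod_Ico _ hM]
  rw [prod_eq_one (s := Ico N M), mul_one]
  intro i hi
  have := mem_Ico.1 hi
  rw [pow_eq_zero_of_le (by have := he i; omega) hq]; simp

lemma qP_stable {q : R} {D : ℕ} (hq : q ^ D = 0) (m : ℕ) {N M : ℕ} (hN : D ≤ N) (hM : D ≤ M) :
    qP (q ^ (m + 1)) M = qP (q ^ (m + 1)) N := by
  have key : ∀ M, D ≤ M → qP (q ^ (m + 1)) M = qP (q ^ (m + 1)) D := by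
    intro M hM
    have := prod_stable hq (-1) (fun i => (m + 1) * (i + 1)) (fun i => by nlinarith) le_rfl hM
    unfold qP
    simpa [pow_mul, sub_eq_add_neg] using this
  rw [key M hM, key N hN]

lemma qP_unit {q : R} {D : ℕ} (hq : q ^ D = 0) (m N : ℕ) : IsUnit (qP (q ^ (m + 1)) N) := by
  unfold qP
  rw [IsUnit.prod_iff]
  intro i _
  apply IsNilpotent.isUnit_one_sub
  refine ⟨D, ?_⟩
  rw [← pow_mul, ← pow_mul]
  exact pow_eq_zero_of_le ((Nat.le_mul_of_pos_left D i.succ_pos).trans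
    (Nat.le_mul_of_pos_left _ m.succ_pos)) hq

lemma prod_group (f : ℕ → R) (m N : ℕ) :
    ∏ i ∈ range (m * N), f i = ∏ i ∈ range N, ∏ j ∈ range m, f (m * i + j) := by
  induction N with
  | zero => simp
  | succ N ih => rw [Nat.mul_succ, prod_range_add, ih, prod_range_succ]

lemma th_zero {q : R} {D : ℕ} (hq : q ^ D = 0) {r : ℕ} (hr : D ≤ r) (h1 : 0 < r) :
    th (q ^ 3) (q ^ 5) r = 0 := by
  unfold th
  rw [if_neg h1.ne', ← pow_mul, ← pow_mul, pow_eq_zero_of_le (n := 3 * r) (by omega) hq,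
    pow_eq_zero_of_le (n := 5 * r) (by omega) hq]
  simp

lemma bW_eq (q : R) (r : ℕ) :
    bW (q ^ 2) (-q) r = q ^ (r * r) * ∏ i ∈ range r, (1 + q ^ (2 * i + 1)) := by
  induction r with
  | zero => simp [bW]
  | succ r ih =>
    unfold bW at ih ⊢
    rw [prod_range_succ, ih, prod_range_succ]; ring

lemma th_sum {q : R} {D : ℕ} (hq : q ^ D = 0) (hD : 0 < D) (m : ℕ) {N : ℕ} (hN : 2 * D ≤ N) :
    (∑ r ∈ range (N + 1), th (q ^ 3) (q ^ 5) r * qb (q ^ (m + 1)) (2 * N) (N + r))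
      * qP (q ^ (m + 1)) N = ∑ r ∈ range (N + 1), th (q ^ 3) (q ^ 5) r := by
  rw [sum_mul]
  refine sum_congr rfl fun r hr => ?_
  by_cases h : D ≤ r
  · rw [th_zero hq h (by omega)]; simp
  · have h2 := qb_mul' (q ^ (m + 1)) (N := 2 * N) (k := N + r) (by omega)
    rw [qP_stable hq m (N := N) (M := N + r) (by omega) (by omega),
      qP_stable hq m (N := N) (M := 2 * N - (N + r)) (by omega) (by omega),
      qP_stable hq m (N := N) (M := 2 * N) (by omega) (by omega)] at h2
    have h3 : qb (q ^ (m + 1)) (2 * N) (N + r) * qP (q ^ (m + 1)) N = 1 :=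
      (qP_unit hq m N).mul_right_cancel (by rw [h2, one_mul])
    rw [mul_assoc, h3, mul_one]

lemma prod_ident {q : R} {D : ℕ} (hq : q ^ D = 0) {N : ℕ} (hN : 2 * D ≤ N) :
    qP (q ^ 2) N = (∏ i ∈ range N, ((1 - q ^ (8 * i + 1)) * (1 - q ^ (8 * i + 4)) *
      (1 - q ^ (8 * i + 7)))) * ((∏ i ∈ range N, (1 + q ^ (2 * i + 1))) * 
      ((∏ i ∈ range N, ((1 - q ^ (8 * i + 3)) * (1 - q ^ (8 * i + 5)))) * qP (q ^ 8) N)) := by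
  have e1 : qP (q ^ 2) N = ∏ i ∈ range N, ((1 - q ^ (8 * i + 2)) * (1 - q ^ (8 * i + 4)) *
      (1 - q ^ (8 * i + 6)) * (1 - q ^ (8 * i + 8))) := by
    rw [← qP_stable hq 1 (N := N) (M := 4 * N) (by omega) (by omega)]
    unfold qP
    rw [prod_group]
    refine prod_congr rfl fun i _ => ?_
    simp only [prod_range_succ, prod_range_zero]
    ring
  have e2 : ∏ i ∈ range N, (1 + q ^ (2 * i + 1)) = ∏ i ∈ range N, ((1 + q ^ (8 * i + 1)) *
      (1 + q ^ (8 * i + 3)) * (1 + q ^ (8 * i + 5)) * (1 + q ^ (8 * i + 7))) := by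
    have := prod_stable hq 1 (fun i => 2 * i + 1) (fun i => by omega) (N := N) (M := 4 * N)
      (by omega) (by omega)
    simp only [one_mul] at this
    rw [← this, prod_group]
    refine prod_congr rfl fun i _ => ?_
    simp only [prod_range_succ, prod_range_zero]
    ring
  have e3 : ∏ i ∈ range N, ((1 - q ^ (8 * i + 2)) * (1 - q ^ (8 * i + 6))) =
      ∏ i ∈ range N, ((1 - q ^ (16 * i + 2)) * (1 - q ^ (16 * i + 6)) *
        (1 - q ^ (16 * i + 10)) * (1 - q ^ (16 * i + 14))) := by
    have h1 := prod_stable hq (-1) (fun i => 8 * i + 2) (fun i => by omega) (N := N) (M := 2 * N)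
      (by omega) (by omega)
    have h2 := prod_stable hq (-1) (fun i => 8 * i + 6) (fun i => by omega) (N := N) (M := 2 * N)
      (by omega) (by omega)
    simp only [neg_mul, one_mul, ← sub_eq_add_neg] at h1 h2
    rw [prod_mul_distrib, ← h1, ← h2, ← prod_mul_distrib, prod_group]
    refine prod_congr rfl fun i _ => ?_
    simp only [prod_range_succ, prod_range_zero]
    ring
  have e4 : qP (q ^ 2) N = (∏ i ∈ range N, ((1 - q ^ (8 * i + 2)) * (1 - q ^ (8 * i + 6)))) *
      ∏ i ∈ range N, ((1 - q ^ (8 * i + 4)) * (1 - q ^ (8 * i + 8))) := by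
    rw [e1, ← prod_mul_distrib]
    exact prod_congr rfl fun i _ => by ring
  rw [e4, e3, e2]
  unfold qP
  simp only [← prod_mul_distrib]
  refine prod_congr rfl fun i _ => ?_
  generalize hz : q ^ (8 * i) = z
  have hz2 : q ^ (16 * i) = z ^ 2 := by rw [← hz, ← pow_mul]; congr 1; ring
  have hz3 : (q ^ 8) ^ (i + 1) = z * q ^ 8 := by rw [← hz]; ring
  simp only [pow_add, hz, hz2, hz3]
  ring

lemma nil_main {q : R} {D : ℕ} (hq : q ^ D = 0) (hD : 0 < D) {N : ℕ} (hN : 2 * D ≤ N)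
    (H : ℕ → R) (hH : ∀ n, H n * qP (q ^ 2) n = 1) (Bq : R)
    (hB : Bq * ∏ i ∈ range N, ((1 - q ^ (8 * i + 1)) * (1 - q ^ (8 * i + 4)) *
      (1 - q ^ (8 * i + 7))) = 1) :
    ∑ n ∈ range (N + 1), q ^ (n * n) * (∏ i ∈ range n, (1 + q ^ (2 * i + 1))) * H n = Bq := by
  have hF : ∑ n ∈ range (N + 1), q ^ (n * n) * (∏ i ∈ range n, (1 + q ^ (2 * i + 1))) * H n
      = ∑ n ∈ range (N + 1), bW (q ^ 2) (-q) n * qb (q ^ 2) N n := by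
    refine sum_congr rfl fun n hn => ?_
    rw [bW_eq]
    by_cases h : D ≤ n
    · rw [pow_eq_zero_of_le (n := n * n) (by nlinarith) hq]; simp
    · have h2 := qb_mul' (q ^ 2) (N := N) (k := n) (by omega)
      rw [qP_stable hq 1 (N := N) (M := N - n) (by omega) (by omega)] at h2
      have h3 : qb (q ^ 2) N n * qP (q ^ 2) n = 1 :=
        (qP_unit hq 1 N).mul_right_cancel (by rw [h2, one_mul])
      congr 1
      apply (qP_unit hq 1 n).mul_right_cancel
      rw [h3, hH]
  have h1 := bailey_ring q N
  rw [qP_stable hq 1 (N := N) (M := 2 * N) (by omega) (by omega)] at h1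
  have h2 := th_sum hq hD 1 hN
  have h3 := th_sum hq hD 7 hN
  simp only [Nat.reduceAdd] at h2 h3
  rw [jtp_ring] at h3
  rw [mul_assoc, mul_comm (qP (q ^ 2) N), h2, ← h3, ← hF] at h1
  apply (qP_unit hq 1 N).mul_right_cancel
  simp only [Nat.reduceAdd]
  rw [h1, prod_ident hq hN]
  rw [← mul_assoc Bq, hB, one_mul]

end nilp
section counting
open PowerSeries

lemma finite_ms (a b : ℕ) : {s : Multiset ℕ | Multiset.card s = a ∧ s.sum ≤ b}.Finite := by
  refine (Set.finite_Iic (a • (Multiset.range (b + 1)))).subset ?_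
  rintro s ⟨h1, h2⟩
  rw [Set.mem_Iic, Multiset.le_iff_count]
  intro x
  by_cases hx : x ∈ s
  · have hxb : x ≤ b := (Multiset.le_sum_of_mem hx).trans h2
    have : Multiset.count x (Multiset.range (b + 1)) = 1 :=
      Multiset.count_eq_one_of_mem (Multiset.nodup_range _) (Multiset.mem_range.2 (by omega))
    rw [Multiset.count_nsmul, this, ← h1, mul_one]
    exact Multiset.count_le_card x s
  · rw [Multiset.count_eq_zero_of_notMem hx]; omega

/-- Multisets of `k` naturals with twice the sum equal to `n`. -/
abbrev gS (k c n : ℕ) := {s : Multiset ℕ // Multiset.card s = k ∧ c + 2 * s.sum = n}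

instance gS_finite (k c n : ℕ) : Finite (gS k c n) :=
  ((finite_ms k n).subset fun s hs => ⟨hs.1, by have := hs.2; omega⟩ :
    {s : Multiset ℕ | Multiset.card s = k ∧ c + 2 * s.sum = n}.Finite).to_subtype

lemma gS_shift (k c n : ℕ) : Nat.card (gS k c n) =
    if c ≤ n then Nat.card (gS k 0 (n - c)) else 0 := by
  split_ifs with h
  · exact Nat.card_congr (Equiv.subtypeEquivRight fun s => by
      constructor
      · rintro ⟨h1, h2⟩; exact ⟨h1, by omega⟩
      · rintro ⟨h1, h2⟩; exact ⟨h1, by omega⟩)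
  · have : IsEmpty (gS k c n) := ⟨fun s => by have := s.2.2; omega⟩
    simp

lemma gS_rec (k n : ℕ) : Nat.card (gS (k + 1) 0 n) =
    Nat.card (gS k 0 n) + Nat.card (gS (k + 1) (2 * (k + 1)) n) := by
  rw [← Nat.card_sum]
  symm
  refine Nat.card_congr (Equiv.ofBijective (Sum.elim
    (fun s => ⟨0 ::ₘ s.1, by simp [s.2.1], by have := s.2.2; simpa using this⟩)
    (fun s => ⟨s.1.map (· + 1), by simp [s.2.1], by
      have h1 := s.2.1
      have h2 := s.2.2
      rw [Multiset.sum_map_add]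
      simp [h1]; omega⟩)) ⟨?_, ?_⟩)
  · rintro (⟨s, hs⟩ | ⟨s, hs⟩) (⟨t, ht⟩ | ⟨t, ht⟩) h
    · simp at h; simp [h]
    · exfalso
      simp only [Sum.elim_inl, Sum.elim_inr, Subtype.mk.injEq] at h
      have : (0 : ℕ) ∈ t.map (· + 1) := h ▸ Multiset.mem_cons_self 0 s
      simp at this
    · exfalso
      simp only [Sum.elim_inl, Sum.elim_inr, Subtype.mk.injEq] at h
      have : (0 : ℕ) ∈ s.map (· + 1) := h ▸ Multiset.mem_cons_self 0 t
      simp at this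
    · simp only [Sum.elim_inr, Subtype.mk.injEq] at h
      have := Multiset.map_injective (add_left_injective 1) h
      simp [this]
  · rintro ⟨s, hs1, hs2⟩
    by_cases h0 : 0 ∈ s
    · obtain ⟨t, rfl⟩ := Multiset.exists_cons_of_mem h0
      refine ⟨Sum.inl ⟨t, by simpa using hs1, by simpa using hs2⟩, by simp⟩
    · have hm : (s.map (· - 1)).map (· + 1) = s := by
        rw [Multiset.map_map]
        conv_rhs => rw [← Multiset.map_id s]
        refine Multiset.map_congr rfl fun x hx => ?_
        have : x ≠ 0 := fun h => h0 (h ▸ hx)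
        simp; omega
      refine ⟨Sum.inr ⟨s.map (· - 1), by simpa using hs1, ?_⟩, by simp [hm]⟩
      have h3 := congrArg Multiset.sum hm
      rw [Multiset.sum_map_add] at h3
      simp [hs1] at h3
      omega

/-- Generating function. -/
noncomputable def gH (k : ℕ) : ℤ⟦X⟧ := PowerSeries.mk fun n => (Nat.card (gS k 0 n) : ℤ)

lemma coeff_X_pow_gH (k c n : ℕ) :
    coeff n ((X : ℤ⟦X⟧) ^ c * gH k) = (Nat.card (gS k c n) : ℤ) := by
  rw [coeff_X_pow_mul', gS_shift]
  split_ifs <;> simp [gH]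

lemma gH_zero : gH 0 = 1 := by
  ext n
  rw [gH, coeff_mk, coeff_one]
  split_ifs with h
  · subst h
    have : Nat.card (gS 0 0 0) = 1 := by
      rw [Nat.card_eq_one_iff_unique]
      refine ⟨⟨fun a b => Subtype.ext ?_⟩, ⟨⟨0, by simp⟩⟩⟩
      rw [Multiset.card_eq_zero.1 a.2.1, Multiset.card_eq_zero.1 b.2.1]
    rw [this]; simp
  · have : IsEmpty (gS 0 0 n) := ⟨fun s => by
      have h1 := Multiset.card_eq_zero.1 s.2.1
      have h2 := s.2.2
      rw [h1] at h2; simp at h2; omega⟩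
    simp

lemma gH_mul (k : ℕ) : gH k * qP (X ^ 2) k = 1 := by
  induction k with
  | zero => simp [gH_zero, qP_zero]
  | succ k ih =>
    have : gH (k + 1) = gH k + X ^ (2 * (k + 1)) * gH (k + 1) := by
      ext n
      rw [map_add, coeff_X_pow_gH, gH, gH, coeff_mk, coeff_mk, gS_rec]; simp
    rw [qP_succ, ← pow_mul]
    linear_combination (qP (X ^ 2) k) * this + ih

/-- Shifted pairs. -/
abbrev sG (n : ℕ) := {t : Finset ℕ × Multiset ℕ // t.1 ⊆ range (Multiset.card t.2) ∧
  (Multiset.card t.2 * Multiset.card t.2 + ∑ i ∈ t.1, (2 * i + 1)) + 2 * t.2.sum = n}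

lemma sum_odd (k : ℕ) : ∑ i ∈ range k, (2 * i + 1) = k * k := by
  induction k with
  | zero => simp
  | succ k ih => rw [sum_range_succ, ih]; ring

lemma card_sG (n N : ℕ) (h : n ≤ N) : Nat.card (sG n) = ∑ k ∈ range (N + 1),
    ∑ T ∈ (range k).powerset, Nat.card (gS k (k * k + ∑ i ∈ T, (2 * i + 1)) n) := by
  have e : sG n ≃ Σ k : range (N + 1), Σ T : (range k.1).powerset,
      gS k.1 (k.1 * k.1 + ∑ i ∈ T.1, (2 * i + 1)) n :=
    { toFun := fun t => ⟨⟨Multiset.card t.1.2, by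
        have := t.2.2
        have h2 := Nat.le_mul_self (Multiset.card t.1.2)
        rw [mem_range]; omega⟩, ⟨t.1.1, mem_powerset.2 t.2.1⟩, ⟨t.1.2, rfl, t.2.2⟩⟩
      invFun := fun x => ⟨(x.2.1.1, x.2.2.1), by
        have h1 := mem_powerset.1 x.2.1.2
        have h2 := x.2.2.2.1
        have h3 := x.2.2.2.2
        simp only [h2]
        exact ⟨h1, h3⟩⟩
      left_inv := fun t => rfl
      right_inv := by
        rintro ⟨⟨k, hk⟩, ⟨T, hT⟩, ⟨s, hs, h⟩⟩
        dsimp only at hs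
        subst hs
        rfl }
  rw [Nat.card_congr e, Nat.card_sigma]
  simp only [Nat.card_sigma]
  rw [← sum_coe_sort (range (N + 1))]
  refine sum_congr rfl fun k _ => ?_
  rw [← sum_coe_sort ((range k.1).powerset)]

lemma C_eq (n : ℕ) : _root_.C n = Nat.card (sG n) := by
  unfold _root_.C
  symm
  have key : ∀ (k : ℕ) (T : Finset ℕ), T ⊆ range k →
      ((range k \ T).val.map (fun i => 2 * i + 1)).sum + ∑ i ∈ T, (2 * i + 1) = k * k := by
    intro k T hT
    have : ((range k \ T).val.map (fun i => 2 * i + 1)).sum = ∑ i ∈ range k \ T, (2 * i + 1) := rfl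
    rw [this, sum_sdiff hT, sum_odd]
  have keys : ∀ (k : ℕ) (s : Multiset ℕ), (s.map (fun a => 2 * a + 2 * k)).sum
      = 2 * s.sum + 2 * (Multiset.card s * k) := by
    intro k s
    rw [Multiset.sum_map_add, Multiset.sum_map_mul_left]; simp; ring
  refine Nat.card_congr (Equiv.ofBijective (fun t =>
    ⟨(t.1.2.map (fun a => 2 * a + 2 * Multiset.card t.1.2),
      (range (Multiset.card t.1.2) \ t.1.1).val.map (fun i => 2 * i + 1)), ?_⟩) ⟨?_, ?_⟩)
  · obtain ⟨⟨T, s⟩, hT, h⟩ := t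
    dsimp only at hT h ⊢
    have k1 := key _ T hT
    have k2 := keys (Multiset.card s) s
    refine ⟨?_, ?_, ?_, ?_, ?_, ?_⟩
    · intro a ha
      simp only [Multiset.mem_map] at ha
      obtain ⟨b, hb, rfl⟩ := ha
      have : 0 < Multiset.card s := Multiset.card_pos_iff_exists_mem.2 ⟨b, hb⟩
      omega
    · intro a ha
      simp only [Multiset.mem_map] at ha
      obtain ⟨b, hb, rfl⟩ := ha
      omega
    · intro a ha
      simp only [Multiset.mem_map] at ha
      obtain ⟨b, hb, rfl⟩ := ha
      rw [Multiset.card_map]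
      exact ⟨⟨b + Multiset.card s, by ring⟩, by omega⟩
    · exact Multiset.Nodup.map (fun a b h => by simpa using h) (range _ \ T).nodup
    · intro a ha
      simp only [Multiset.mem_map, mem_val, mem_sdiff, mem_range] at ha
      obtain ⟨b, hb, rfl⟩ := ha
      rw [Multiset.card_map]
      exact ⟨⟨b, rfl⟩, by omega⟩
    · dsimp only
      push_cast [k2]
      zify at k1 h
      push_cast at k1
      linarith
  · rintro ⟨⟨T, s⟩, hT, h⟩ ⟨⟨T', s'⟩, hT', h'⟩ heq
    simp only [Subtype.mk.injEq, Prod.mk.injEq] at heq hT hT' ⊢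
    obtain ⟨h1, h2⟩ := heq
    have hc : Multiset.card s = Multiset.card s' := by
      simpa using congrArg Multiset.card h1
    rw [hc] at h1 h2 hT
    have hs := Multiset.map_injective (f := fun a => 2 * a + 2 * Multiset.card s')
      (fun a b h => by simpa using h) h1
    have hT2 := Multiset.map_injective (f := fun a => 2 * a + 1)
      (fun a b h => by simpa using h) h2
    have hT3 := val_injective hT2
    refine ⟨?_, hs⟩
    rw [← Finset.sdiff_sdiff_eq_self hT, hT3, Finset.sdiff_sdiff_eq_self hT']
  · rintro ⟨⟨p, v⟩, h1, h2, h3, h4, h5, h6⟩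
    dsimp only at h1 h2 h3 h4 h5 h6
    set k := Multiset.card p with hk
    have hs : (p.map (fun a => a / 2 - k)).map (fun a => 2 * a + 2 * k) = p := by
      rw [Multiset.map_map]
      conv_rhs => rw [← Multiset.map_id p]
      refine Multiset.map_congr rfl fun x hx => ?_
      obtain ⟨⟨c, rfl⟩, h⟩ := h3 x hx
      simp; omega
    have hv : ((range k \ (range k).filter (fun i => 2 * i + 1 ∉ v)).val.map
        (fun i => 2 * i + 1)) = v := by
      refine (Multiset.Nodup.ext (Multiset.Nodup.map (fun a b h => by simpa using h)
        (Finset.nodup _)) h4).2 fun a => ?_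
      simp only [Multiset.mem_map, mem_val, mem_sdiff, mem_range, mem_filter, not_and, not_not]
      constructor
      · rintro ⟨i, ⟨hi, h⟩, rfl⟩
        exact h hi
      · intro ha
        obtain ⟨⟨c, rfl⟩, h⟩ := h5 a ha
        exact ⟨c, ⟨by omega, fun _ => ha⟩, rfl⟩
    have hsub : (range k).filter (fun i => 2 * i + 1 ∉ v) ⊆ range k := filter_subset _ _
    refine ⟨⟨((range k).filter (fun i => 2 * i + 1 ∉ v), p.map (fun a => a / 2 - k)), ?_, ?_⟩, ?_⟩
    · simpa [← hk] using hsub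
    · dsimp only
      rw [Multiset.card_map, ← hk]
      have a1 := key k _ hsub
      have a2 := keys k (p.map (fun a => a / 2 - k))
      rw [hv] at a1
      rw [hs, Multiset.card_map, ← hk] at a2
      omega
    · simp only [Multiset.card_map, ← hk, hs, hv]

lemma C_coeff (n N : ℕ) (h : n ≤ N) : (_root_.C n : ℤ) = coeff n (∑ k ∈ range (N + 1),
    (X : ℤ⟦X⟧) ^ (k * k) * (∏ i ∈ range k, (1 + X ^ (2 * i + 1))) * gH k) := by
  rw [C_eq, card_sG n N h, map_sum]
  push_cast
  refine sum_congr rfl fun k _ => ?_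
  rw [prod_one_add, mul_sum, sum_mul, map_sum]
  refine sum_congr rfl fun T _ => ?_
  rw [prod_pow_eq_pow_sum, ← pow_add, coeff_X_pow_gH]

/-- The residue condition. -/
abbrev pB (a : ℕ) : Prop := a % 8 = 1 ∨ a % 8 = 4 ∨ a % 8 = 7

lemma B_eq (n : ℕ) : B n = #(Nat.Partition.restricted n pB) := by
  unfold B
  rw [Nat.card_eq_fintype_card, Fintype.card_subtype]
  rfl

open PowerSeries.WithPiTopology in
lemma B_prod (D : ℕ) : ∃ N, 2 * D ≤ N ∧ (X : ℤ⟦X⟧) ^ D ∣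
    (PowerSeries.mk fun n => (B n : ℤ)) * (∏ i ∈ range N, ((1 - X ^ (8 * i + 1)) *
      (1 - X ^ (8 * i + 4)) * (1 - X ^ (8 * i + 7)))) - 1 := by
  have hp := Nat.Partition.hasProd_powerSeriesMk_card_restricted ℤ pB
  simp only [← B_eq] at hp
  set PB : ℤ⟦X⟧ := PowerSeries.mk fun n => (B n : ℤ) with hPB
  have ht := hp.tendsto_prod_nat
  rw [WithPiTopology.tendsto_iff_coeff_tendsto] at ht
  have hev : ∀ᶠ M in Filter.atTop, ∀ d ∈ range D, coeff d (∏ i ∈ range M,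
      (if pB (i + 1) then ∑' j : ℕ, (X : ℤ⟦X⟧) ^ ((i + 1) * j) else 1)) = coeff d PB := by
    rw [Filter.eventually_all_finset]
    intro d _
    have := ht d
    rw [nhds_discrete, Filter.tendsto_pure] at this
    exact this
  obtain ⟨M0, hM0⟩ := Filter.eventually_atTop.1 hev
  refine ⟨M0 + 2 * D, by omega, ?_⟩
  set N := M0 + 2 * D with hN
  have hM := hM0 (8 * N) (by omega)
  set G := ∏ i ∈ range (8 * N),
      (if pB (i + 1) then ∑' j : ℕ, (X : ℤ⟦X⟧) ^ ((i + 1) * j) else 1) with hG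
  set Q := ∏ i ∈ range N, ((1 - (X : ℤ⟦X⟧) ^ (8 * i + 1)) *
      (1 - X ^ (8 * i + 4)) * (1 - X ^ (8 * i + 7))) with hQ
  have hQ' : Q = ∏ i ∈ range (8 * N), (if pB (i + 1) then (1 - (X : ℤ⟦X⟧) ^ (i + 1)) else 1) := by
    rw [hQ, prod_group]
    refine prod_congr rfl fun i _ => ?_
    have a : ∀ j, (8 * i + j + 1) % 8 = (j + 1) % 8 := by intro j; omega
    simp only [prod_range_succ, prod_range_zero, pB, a]
    simp
  have hGQ : G * Q = 1 := by
    rw [hQ', hG, ← prod_mul_distrib]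
    refine prod_eq_one fun i _ => ?_
    split_ifs
    · simp only [pow_mul]
      exact WithPiTopology.tsum_pow_mul_one_sub_of_constantCoeff_eq_zero (by simp)
    · simp
  have hd : (X : ℤ⟦X⟧) ^ D ∣ PB - G := by
    rw [X_pow_dvd_iff]
    intro m hm
    rw [map_sub, hM m (mem_range.2 hm), sub_self]
  have : PB * Q - 1 = (PB - G) * Q := by rw [sub_mul, hGQ]
  rw [this]
  exact hd.mul_right Q

end counting

/-- **Andrews' theorem**: `C n = B n` for all `n`. -/
theorem andrews_signed (n : ℕ) : C n = B n := by
  obtain ⟨N, hN, hdvd⟩ := B_prod (n + 1)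
  have hC := C_coeff n N (by omega)
  let I : Ideal (PowerSeries ℤ) := Ideal.span {(PowerSeries.X : PowerSeries ℤ) ^ (n + 1)}
  let φ : PowerSeries ℤ →+* PowerSeries ℤ ⧸ I := Ideal.Quotient.mk I
  have hφ : ∀ a b : PowerSeries ℤ, φ a = φ b ↔ (PowerSeries.X : PowerSeries ℤ) ^ (n + 1) ∣ a - b := by
    intro a b
    rw [Ideal.Quotient.eq, Ideal.mem_span_singleton]
  have hq : (φ PowerSeries.X) ^ (n + 1) = 0 := by
    rw [← map_pow, ← map_zero φ, hφ]; simp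
  have h := nil_main hq (Nat.succ_pos n) hN (fun k => φ (gH k))
    (fun k => by rw [← map_pow, ← map_qP, ← map_mul, gH_mul, map_one])
    (φ (PowerSeries.mk fun n => (B n : ℤ)))
    (by
      have := (hφ _ _).2 hdvd
      simpa only [map_mul, map_prod, map_sub, map_one, map_pow] using this)
  have h2 : φ (∑ k ∈ range (N + 1), (PowerSeries.X : PowerSeries ℤ) ^ (k * k) *
      (∏ i ∈ range k, (1 + PowerSeries.X ^ (2 * i + 1))) * gH k)
      = φ (PowerSeries.mk fun n => (B n : ℤ)) := by
    rw [← h]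
    simp only [map_mul, map_prod, map_add, map_one, map_pow, map_sum]
  have h3 := PowerSeries.X_pow_dvd_iff.1 ((hφ _ _).1 h2) n (Nat.lt_succ_self n)
  rw [map_sub, ← hC, PowerSeries.coeff_mk, sub_eq_zero] at h3
  exact_mod_cast h3
end
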